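/- arXiv:2506.11296 — 2 statements merged into one kernel-verified Lean document; each statement's English description precedes it below -/
import Mathlib

section
/- Let d ≥ 1 be an integer, α ∈ (0,1), β ∈ (0,1), m > 0, and let v ∈ ℝ^d be a unit vector. Then u_{α,1}(t, m t^β v) → ∞ as t → ∞. -/
open Real MeasureTheory Filter Topology

/-- The Wright function `W_{λ,μ}(z) = ∑ z^n / (n! Γ(λn+μ))`.
(In Mathlib, `Real.Gamma` vanishes at nonpositive integers, so `1/Γ(s) = 0` there.) -/
noncomputable def wrightFn (l μ z : ℝ) : ℝ :=
  ∑' n : ℕ, z ^ n / (n.factorial * Real.Gamma (l * n + μ))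

/-- The fundamental solution `u_{α,1}` of `∂_t^α u − Δu = u`, `u(0,·)=δ₀`,
via the subordination formula. -/
noncomputable def fundSol (α : ℝ) (d : ℕ) (t : ℝ) (x : EuclideanSpace ℝ (Fin d)) : ℝ :=
  t ^ (-α) * ∫ s in Set.Ioi (0 : ℝ),
    Real.exp s * (Real.exp (-‖x‖ ^ 2 / (4 * s)) / (4 * Real.pi * s) ^ ((d : ℝ) / 2)) *
      wrightFn (-α) (1 - α) (-(t ^ (-α) * s))

/-!
The Mainardi function `M_α(r) = W_{-α,1-α}(-r)` is a Hankel contour integral, and is therefore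
continuous, superexponentially decaying, with moments `∫ r^k M_α = k! / Γ(αk + 1)`. These numbers
are limits of rescaled moments of the nonnegative weights given by the coefficients of
`(1 - z)^(α-1) (1 - (1 - z)^α)^k`, so `∫ P² M_α ≥ 0` for every polynomial `P`. Since `M_α` decays
superexponentially, `P` may be replaced first by a polynomial in `e^{-r} = lim (1 - r/n)^n` and
then, by Weierstrass, by any continuous function of `e^{-r}`; hence `M_α ≥ 0`.

The exponential moment of `M_α` is the Mittag-Leffler series: if `τ^α = l`, then
`∫ e^{lr} M_α(r) dr = ∑ l^k / Γ(αk + 1) ≥ (e^τ - 1) / τ`, by keeping only the terms `k = ⌈n / α⌉`.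
In the subordination formula the Gaussian prefactor costs at most `e^{s/2}`, and
`e^{-‖x‖²/(4s)} ≥ e^{-‖x‖²/(4τ)}` for `s ≥ τ`, so with `τ = 2^{-1/α} t` the fundamental solution is
at least `c e^{-‖x‖²/(4τ)} ((e^τ - 1) / τ - e^{τ/2})`. This exceeds `c e^{τ/4}` once `‖x‖ ≤ τ`,
which holds for all large `t` because `‖x‖ = m t^β = o(t)`.
-/

section ExponentialIntegrals

lemma integrableOn_rpow_sub_one_mul_exp_Ioi {s c : ℝ} (hs : 0 < s) (hc : c < 0) :
    IntegrableOn (fun x : ℝ ↦ x ^ (s - 1) * Real.exp (c * x)) (Set.Ioi 0) := by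
  simpa using integrableOn_rpow_mul_exp_neg_mul_rpow (p := 1) (s := s - 1) (b := -c)
    (by linarith) one_pos (by linarith)

/-- The measure `x ^ (s - 1) dx` on `(0, ∞)`, whose moment generating function is the complex Gamma
integral. -/
noncomputable def rpowMeasure (s : ℝ) : Measure ℝ :=
  (volume.restrict (Set.Ioi 0)).withDensity fun x ↦ ENNReal.ofReal (x ^ (s - 1))

lemma complexMGF_rpowMeasure (s : ℝ) (z : ℂ) :
    ProbabilityTheory.complexMGF id (rpowMeasure s) z =
      ∫ x in Set.Ioi (0 : ℝ), ((x ^ (s - 1) : ℝ) : ℂ) * Complex.exp (z * x) := by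
  rw [ProbabilityTheory.complexMGF, rpowMeasure,
    integral_withDensity_eq_integral_toReal_smul (by fun_prop) (by simp)]
  refine setIntegral_congr_fun measurableSet_Ioi fun x hx ↦ ?_
  simp only [ENNReal.toReal_ofReal (Real.rpow_nonneg (le_of_lt hx) _), id_eq, Complex.real_smul]

lemma Iio_subset_integrableExpSet_rpowMeasure {s : ℝ} (hs : 0 < s) :
    Set.Iio 0 ⊆ ProbabilityTheory.integrableExpSet id (rpowMeasure s) := by
  intro c hc
  rw [ProbabilityTheory.integrableExpSet, Set.mem_ofPred_eq, rpowMeasure,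
    integrable_withDensity_iff_integrable_smul₀' (by fun_prop) (by simp)]
  refine (integrableOn_rpow_sub_one_mul_exp_Ioi hs hc).congr_fun (fun x hx ↦ ?_) measurableSet_Ioi
  simp only [ENNReal.toReal_ofReal (Real.rpow_nonneg (le_of_lt hx) _), id_eq, smul_eq_mul]

lemma integral_rpow_mul_cexp_mul_Ioi {s : ℝ} (hs : 0 < s) {z : ℂ} (hz : z.re < 0) :
    ∫ x in Set.Ioi (0 : ℝ), ((x ^ (s - 1) : ℝ) : ℂ) * Complex.exp (z * x) =
      (-z) ^ (-s : ℂ) * Real.Gamma s := by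
  let U : Set ℂ := {z | z.re < 0}
  have hU : IsOpen U := isOpen_lt Complex.continuous_re continuous_const
  have hleft : AnalyticOnNhd ℂ (ProbabilityTheory.complexMGF id (rpowMeasure s)) U :=
    ProbabilityTheory.analyticOnNhd_complexMGF.mono fun z hz ↦
      interior_mono (Iio_subset_integrableExpSet_rpowMeasure hs) (by rwa [interior_Iio])
  have hright : AnalyticOnNhd ℂ (fun z : ℂ ↦ (-z) ^ (-s : ℂ) * Real.Gamma s) U := by
    refine DifferentiableOn.analyticOnNhd (fun z hz ↦ ?_) hU
    have hslit : -z ∈ Complex.slitPlane := Or.inl (neg_pos.2 hz)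
    exact ((differentiableAt_id.neg.cpow_const hslit).mul_const _).differentiableWithinAt
  have hreal : ∀ r : ℝ, 0 < r → ProbabilityTheory.complexMGF id (rpowMeasure s) (-r : ℝ) =
      (-((-r : ℝ) : ℂ)) ^ (-s : ℂ) * Real.Gamma s := by
    intro r hr
    rw [complexMGF_rpowMeasure]
    have h := congrArg ((↑) : ℝ → ℂ) (Real.integral_rpow_mul_exp_neg_mul_Ioi hs hr)
    rw [← integral_complex_ofReal] at h
    push_cast [Complex.ofReal_cpow hr.le] at h ⊢
    simp only [one_div, neg_neg, neg_mul] at h ⊢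
    rw [h, Complex.ofReal_cpow (by positivity), Complex.ofReal_inv, Complex.cpow_neg,
      Complex.inv_cpow]
    simpa [Complex.arg_ofReal_of_nonneg hr.le] using pi_ne_zero.symm
  have hfreq : ∃ᶠ z : ℂ in 𝓝[≠] (-1), ProbabilityTheory.complexMGF id (rpowMeasure s) z =
      (-z) ^ (-s : ℂ) * Real.Gamma s := by
    have htend : Tendsto (fun r : ℝ ↦ ((-r : ℝ) : ℂ)) (𝓝[>] 1) (𝓝[≠] (-1)) := by
      refine tendsto_nhdsWithin_iff.2 ⟨?_, ?_⟩
      · exact (Continuous.tendsto' (by fun_prop) 1 (-1) (by simp)).mono_left nhdsWithin_le_nhds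
      · filter_upwards [self_mem_nhdsWithin] with r hr h
        exact hr.ne' (by simpa [neg_eq_iff_eq_neg] using h)
    refine htend.frequently (Eventually.frequently ?_)
    filter_upwards [self_mem_nhdsWithin] with r hr using hreal r (one_pos.trans hr)
  rw [← complexMGF_rpowMeasure]
  exact hleft.eqOn_of_preconnected_of_frequently_eq hright
    (convex_halfSpace_re_lt 0).isPreconnected (by simp [U] : (-1 : ℂ) ∈ U) hfreq hz

end ExponentialIntegrals

section RpowBounds

lemma rpow_le_rpow_add_rpow {x l u p : ℝ} (hl : 0 < l) (hlx : l ≤ x) (hxu : x ≤ u) :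
    x ^ p ≤ l ^ p + u ^ p := by
  have hx := hl.trans_le hlx
  rcases le_total 0 p with hp | hp
  · linarith [Real.rpow_le_rpow hx.le hxu hp, Real.rpow_nonneg hl.le p]
  · linarith [Real.rpow_le_rpow_of_nonpos hl hlx hp, Real.rpow_nonneg (hx.le.trans hxu) p]

lemma rpow_le_rpow_add_rpow_exponent {x p q r : ℝ} (hx : 0 < x) (hqp : q ≤ p) (hpr : p ≤ r) :
    x ^ p ≤ x ^ q + x ^ r := by
  rcases le_total 1 x with h | h
  · linarith [Real.rpow_le_rpow_of_exponent_le h hpr, Real.rpow_nonneg hx.le q]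
  · linarith [Real.rpow_le_rpow_of_exponent_ge hx h hqp, Real.rpow_nonneg hx.le r]

lemma exists_rpow_le_mul_exp (p : ℝ) {l ε : ℝ} (hl : 0 < l) (hε : 0 < ε) :
    ∃ C, 0 ≤ C ∧ ∀ x, l ≤ x → x ^ p ≤ C * Real.exp (ε * x) := by
  rcases le_total 0 p with hp | hp
  · refine ⟨(p / ε) ^ p, by positivity, fun x hx ↦ ?_⟩
    simpa only [abs_of_pos hε, abs_of_pos (hl.trans_le hx)] using
      ProbabilityTheory.rpow_abs_le_mul_exp_abs x hp hε.ne'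
  · refine ⟨l ^ p, by positivity, fun x hx ↦ ?_⟩
    have hexp : 1 ≤ Real.exp (ε * x) :=
      Real.one_le_exp (mul_nonneg hε.le (hl.le.trans hx))
    exact (Real.rpow_le_rpow_of_nonpos hl hx hp).trans
      (le_mul_of_one_le_right (Real.rpow_nonneg hl.le p) hexp)

end RpowBounds

section Ray

/-- The ray `a + e^{iθ} [0, ∞)`. Together with its complex conjugate it forms the Hankel contour;
since the integrands below commute with conjugation, the upper half suffices. -/
noncomputable def ray (θ a ρ : ℝ) : ℂ := a + ρ * Complex.exp (θ * Complex.I)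

/-- The integral of `F` along `ray θ a`. -/
noncomputable def rayIntegral (θ a : ℝ) (F : ℂ → ℂ) : ℂ :=
  ∫ ρ in Set.Ioi (0 : ℝ), Complex.exp (θ * Complex.I) * F (ray θ a ρ)

variable {θ a ρ : ℝ}

@[fun_prop]
lemma continuous_ray (θ a : ℝ) : Continuous (ray θ a) := by
  unfold ray; fun_prop

lemma ray_zero_right (θ a : ℝ) : ray θ a 0 = a := by simp [ray]

lemma ray_re (θ a ρ : ℝ) : (ray θ a ρ).re = a + Real.cos θ * ρ := by
  simp [ray, Complex.exp_ofReal_mul_I_re, mul_comm (Real.cos θ)]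

lemma ray_im (θ a ρ : ℝ) : (ray θ a ρ).im = Real.sin θ * ρ := by
  simp [ray, Complex.exp_ofReal_mul_I_im, mul_comm (Real.sin θ)]

lemma hasDerivAt_ray (θ a ρ : ℝ) :
    HasDerivAt (ray θ a) (Complex.exp (θ * Complex.I)) ρ := by
  unfold ray
  simpa using ((Complex.ofRealCLM.hasDerivAt (x := ρ)).mul_const
    (Complex.exp (θ * Complex.I))).const_add (a : ℂ)

lemma hasDerivAt_ray_start (θ a ρ : ℝ) : HasDerivAt (fun a ↦ ray θ a ρ) 1 a := by
  unfold ray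
  simpa using (Complex.ofRealCLM.hasDerivAt (x := a)).add_const
    (ρ * Complex.exp (θ * Complex.I))

lemma norm_cexp_ray (θ a ρ : ℝ) :
    ‖Complex.exp (ray θ a ρ)‖ = Real.exp a * Real.exp (Real.cos θ * ρ) := by
  rw [Complex.norm_exp, ray_re, Real.exp_add]

lemma norm_ray_le (ha : 0 ≤ a) (hρ : 0 ≤ ρ) : ‖ray θ a ρ‖ ≤ a + ρ := by
  refine (norm_add_le _ _).trans_eq ?_
  rw [norm_mul, Complex.norm_exp_ofReal_mul_I, mul_one, Complex.norm_of_nonneg ha,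
    Complex.norm_of_nonneg hρ]

lemma cos_half_mul_le_norm_ray (θ a ρ : ℝ) :
    Real.cos (θ / 2) * (a + ρ) ≤ ‖ray θ a ρ‖ := by
  refine le_of_sq_le_sq ?_ (norm_nonneg _)
  have hcos := Real.cos_sq (θ / 2)
  rw [mul_div_cancel₀ θ two_ne_zero] at hcos
  rw [← Complex.normSq_eq_norm_sq, Complex.normSq_apply, ray_re, ray_im, mul_pow, hcos]
  have hdefect : 0 ≤ (1 - Real.cos θ) * (a - ρ) ^ 2 :=
    mul_nonneg (sub_nonneg.2 (Real.cos_le_one θ)) (sq_nonneg _)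
  linear_combination hdefect / 2 - ρ ^ 2 * Real.sin_sq_add_cos_sq θ

lemma ray_mem_slitPlane (hθ : θ ∈ Set.Ioo 0 π) (hρ : 0 ≤ ρ) (h : 0 < a + ρ) :
    ray θ a ρ ∈ Complex.slitPlane := by
  rw [Complex.mem_slitPlane_iff, ray_re, ray_im]
  rcases hρ.eq_or_lt with rfl | hρ
  · left; simpa using h
  · exact Or.inr (mul_pos (Real.sin_pos_of_mem_Ioo hθ) hρ).ne'

lemma ray_ne_zero (hθ : θ ∈ Set.Ioo 0 π) (hρ : 0 ≤ ρ) (h : 0 < a + ρ) :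
    ray θ a ρ ≠ 0 :=
  Complex.slitPlane_ne_zero (ray_mem_slitPlane hθ hρ h)

end Ray

section SuperexpDecay

/-- `f` decays on `[0, ∞)` faster than every exponential. -/
def SuperexpDecay (f : ℝ → ℝ) : Prop :=
  ∀ l : ℝ, ∃ C, ∀ r, 0 ≤ r → |f r| ≤ C * Real.exp (-(l * r))

variable {f g : ℝ → ℝ} {K c : ℝ}

lemma SuperexpDecay.integrableOn_exp_mul_abs (hd : SuperexpDecay f)
    (hf : ContinuousOn f (Set.Ici 0)) (c : ℝ) :
    IntegrableOn (fun y ↦ Real.exp (c * y) * |f y|) (Set.Ioi 0) := by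
  obtain ⟨C, hC⟩ := hd (c + 1)
  have hcont : ContinuousOn (fun y ↦ Real.exp (c * y) * |f y|) (Set.Ioi 0) :=
    ContinuousOn.mul (by fun_prop) (hf.mono Set.Ioi_subset_Ici_self).abs
  have hexp : IntegrableOn (fun y ↦ C * Real.exp (-1 * y)) (Set.Ioi 0) :=
    (integrableOn_exp_mul_Ioi (neg_lt_zero.2 one_pos) 0).const_mul C
  refine hexp.mono' (hcont.aestronglyMeasurable measurableSet_Ioi) ?_
  filter_upwards [ae_restrict_mem measurableSet_Ioi] with y hy
  rw [Real.norm_of_nonneg (by positivity)]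
  calc Real.exp (c * y) * |f y|
    _ ≤ Real.exp (c * y) * (C * Real.exp (-((c + 1) * y))) := by gcongr; exact hC y (le_of_lt hy)
    _ = _ := by rw [mul_left_comm, ← Real.exp_add]; ring_nf

lemma abs_mul_le_of_abs_le_mul_exp (hb : ∀ y, 0 < y → |g y| ≤ K * Real.exp (c * y)) :
    ∀ᵐ y ∂volume.restrict (Set.Ioi 0), ‖g y * f y‖ ≤ K * (Real.exp (c * y) * |f y|) := by
  filter_upwards [ae_restrict_mem measurableSet_Ioi] with y hy
  rw [norm_mul, Real.norm_eq_abs, Real.norm_eq_abs, ← mul_assoc]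
  exact mul_le_mul_of_nonneg_right (hb y hy) (abs_nonneg _)

lemma SuperexpDecay.integrableOn_mul (hd : SuperexpDecay f) (hf : ContinuousOn f (Set.Ici 0))
    (hg : ContinuousOn g (Set.Ioi 0)) (hb : ∀ y, 0 < y → |g y| ≤ K * Real.exp (c * y)) :
    IntegrableOn (fun y ↦ g y * f y) (Set.Ioi 0) :=
  Integrable.mono' ((hd.integrableOn_exp_mul_abs hf c).const_mul K)
    ((hg.mul (hf.mono Set.Ioi_subset_Ici_self)).aestronglyMeasurable measurableSet_Ioi)
    (abs_mul_le_of_abs_le_mul_exp hb)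

lemma SuperexpDecay.tendsto_integral_mul (hd : SuperexpDecay f) (hf : ContinuousOn f (Set.Ici 0))
    {G : ℕ → ℝ → ℝ} (hG : ∀ n, ContinuousOn (G n) (Set.Ioi 0))
    (hb : ∀ n y, 0 < y → |G n y| ≤ K * Real.exp (c * y))
    (hlim : ∀ y, 0 < y → Tendsto (G · y) atTop (𝓝 (g y))) :
    Tendsto (fun n ↦ ∫ y in Set.Ioi 0, G n y * f y) atTop (𝓝 (∫ y in Set.Ioi 0, g y * f y)) := by
  refine tendsto_integral_of_dominated_convergence _ (fun n ↦
    ((hG n).mul (hf.mono Set.Ioi_subset_Ici_self)).aestronglyMeasurable measurableSet_Ioi)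
    ((hd.integrableOn_exp_mul_abs hf c).const_mul K)
    (fun n ↦ abs_mul_le_of_abs_le_mul_exp (hb n)) ?_
  filter_upwards [ae_restrict_mem measurableSet_Ioi] with y hy
  exact (hlim y hy).mul_const _

end SuperexpDecay

section MomentPositivity

variable {f : ℝ → ℝ}

lemma abs_one_sub_div_pow_le_exp (n : ℕ) {y : ℝ} (hy : 0 ≤ y) :
    |(1 - y / n) ^ n| ≤ Real.exp y := by
  rcases eq_or_ne n 0 with rfl | hn
  · simpa using hy
  · calc |(1 - y / n) ^ n|
      _ ≤ (y / n + 1) ^ n := by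
        rw [abs_pow]
        gcongr
        exact abs_le.2 ⟨by linarith, by linarith [show 0 ≤ y / n by positivity]⟩
      _ ≤ Real.exp (y / n) ^ n := by gcongr; exact Real.add_one_le_exp _
      _ = Real.exp y := by rw [← Real.exp_nat_mul, mul_div_cancel₀ _ (Nat.cast_ne_zero.2 hn)]

lemma exists_abs_polynomial_eval_le_mul_exp (p : Polynomial ℝ) :
    ∃ K, ∀ x y, 0 ≤ y → |x| ≤ Real.exp y → |p.eval x| ≤ K * Real.exp (p.natDegree * y) := by
  refine ⟨∑ i ∈ Finset.range (p.natDegree + 1), |p.coeff i|, fun x y hy hx ↦ ?_⟩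
  rw [Polynomial.eval_eq_sum_range, Finset.sum_mul]
  refine (Finset.abs_sum_le_sum_abs _ _).trans (Finset.sum_le_sum fun i hi ↦ ?_)
  rw [abs_mul, abs_pow]
  gcongr
  calc |x| ^ i
    _ ≤ Real.exp y ^ i := by gcongr
    _ = Real.exp (i * y) := (Real.exp_nat_mul y i).symm
    _ ≤ Real.exp (p.natDegree * y) := by gcongr; exact Finset.mem_range_succ_iff.1 hi

lemma SuperexpDecay.integral_sq_eval_exp_neg_mul_nonneg (hd : SuperexpDecay f)
    (hf : ContinuousOn f (Set.Ici 0))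
    (h : ∀ P : Polynomial ℝ, 0 ≤ ∫ y in Set.Ioi 0, P.eval y ^ 2 * f y) (p : Polynomial ℝ) :
    0 ≤ ∫ y in Set.Ioi 0, p.eval (Real.exp (-y)) ^ 2 * f y := by
  obtain ⟨K, hK⟩ := exists_abs_polynomial_eval_le_mul_exp p
  have hlim := hd.tendsto_integral_mul hf (K := K ^ 2) (c := 2 * p.natDegree)
    (G := fun n y ↦ p.eval ((1 - y / n) ^ n) ^ 2) (g := fun y ↦ p.eval (Real.exp (-y)) ^ 2)
    (fun n ↦ by fun_prop) (fun n y hy ↦ ?_) (fun y _ ↦ ?_)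
  · refine ge_of_tendsto' hlim fun n ↦ ?_
    refine (h (p.comp ((1 - Polynomial.C ((n : ℝ)⁻¹) * Polynomial.X) ^ n))).trans_eq ?_
    congr 1 with y
    simp [div_eq_inv_mul]
  · have hpn := hK _ y hy.le (abs_one_sub_div_pow_le_exp n hy.le)
    calc |p.eval ((1 - y / n) ^ n) ^ 2|
      _ ≤ (K * Real.exp (p.natDegree * y)) ^ 2 := by rw [abs_pow]; gcongr
      _ = K ^ 2 * Real.exp (2 * p.natDegree * y) := by
        rw [mul_pow, ← Real.exp_nat_mul]; push_cast; ring_nf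
  · have hexp : Tendsto (fun n : ℕ ↦ (1 - y / n) ^ n) atTop (𝓝 (Real.exp (-y))) := by
      simpa only [neg_div, ← sub_eq_add_neg] using Real.tendsto_one_add_div_pow_exp (-y)
    exact ((p.continuous.tendsto _).comp hexp).pow 2

lemma SuperexpDecay.integral_sq_comp_exp_neg_mul_nonneg (hd : SuperexpDecay f)
    (hf : ContinuousOn f (Set.Ici 0))
    (h : ∀ P : Polynomial ℝ, 0 ≤ ∫ y in Set.Ioi 0, P.eval y ^ 2 * f y) {ψ : ℝ → ℝ}
    (hψ : Continuous ψ) : 0 ≤ ∫ y in Set.Ioi 0, ψ (Real.exp (-y)) ^ 2 * f y := by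
  choose p hp using fun n : ℕ ↦ exists_polynomial_near_of_continuousOn 0 1 ψ hψ.continuousOn
    (1 / ((n : ℝ) + 1)) Nat.one_div_pos_of_nat
  obtain ⟨B, hB⟩ := isCompact_Icc.exists_bound_of_continuousOn (s := Set.Icc 0 1) hψ.continuousOn
  have hmem : ∀ y : ℝ, 0 < y → Real.exp (-y) ∈ Set.Icc 0 1 := fun y hy ↦
    ⟨(Real.exp_pos _).le, Real.exp_le_one_iff.2 (by linarith)⟩
  have hlim := hd.tendsto_integral_mul hf (K := (B + 1) ^ 2) (c := 0)
    (G := fun n y ↦ (p n).eval (Real.exp (-y)) ^ 2) (g := fun y ↦ ψ (Real.exp (-y)) ^ 2)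
    (fun n ↦ by fun_prop) (fun n y hy ↦ ?_) (fun y hy ↦ ?_)
  · exact ge_of_tendsto' hlim fun n ↦ hd.integral_sq_eval_exp_neg_mul_nonneg hf h (p n)
  · rw [zero_mul, Real.exp_zero, mul_one, abs_pow]
    gcongr
    have hnear := (hp n _ (hmem y hy)).le.trans (Nat.one_div_le_one_div (Nat.zero_le n))
    have hbound := hB _ (hmem y hy)
    rw [Real.norm_eq_abs] at hbound
    norm_num at hnear
    linarith [abs_sub_abs_le_abs_sub ((p n).eval (Real.exp (-y))) (ψ (Real.exp (-y)))]
  · refine Tendsto.pow (tendsto_iff_norm_sub_tendsto_zero.2 ?_) 2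
    exact squeeze_zero (fun _ ↦ norm_nonneg _) (fun n ↦ (hp n _ (hmem y hy)).le)
      tendsto_one_div_add_atTop_nhds_zero_nat

lemma exists_continuous_exp_neg_ne_zero_iff_mem_Ioo (a b : ℝ) :
    ∃ ψ : ℝ → ℝ, Continuous ψ ∧ ∀ y, ψ (Real.exp (-y)) ≠ 0 ↔ y ∈ Set.Ioo a b := by
  refine ⟨fun u ↦ max 0 (min (u - Real.exp (-b)) (Real.exp (-a) - u)), by fun_prop, fun y ↦ ?_⟩
  have hpos : ∀ x : ℝ, max 0 x ≠ 0 ↔ 0 < x := fun x ↦ by simp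
  rw [hpos, lt_min_iff, sub_pos, sub_pos, Real.exp_lt_exp, Real.exp_lt_exp, neg_lt_neg_iff,
    neg_lt_neg_iff, and_comm, Set.mem_Ioo]

theorem SuperexpDecay.nonneg_of_integral_sq_mul_nonneg (hd : SuperexpDecay f)
    (hf : ContinuousOn f (Set.Ici 0))
    (h : ∀ P : Polynomial ℝ, 0 ≤ ∫ y in Set.Ioi 0, P.eval y ^ 2 * f y) {a : ℝ} (ha : 0 ≤ a) :
    0 ≤ f a := by
  by_contra! hneg
  have hev : ∀ᶠ y in 𝓝[>] a, f y < 0 :=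
    ((hf a ha).mono fun y (hy : a < y) ↦ ha.trans hy.le).eventually (gt_mem_nhds hneg)
  obtain ⟨b, hab, hb⟩ := (mem_nhdsGT_iff_exists_Ioo_subset).1 hev
  obtain ⟨ψ, hψ, hsupp⟩ := exists_continuous_exp_neg_ne_zero_iff_mem_Ioo a b
  have hle : ∀ y, 0 ≤ -(ψ (Real.exp (-y)) ^ 2 * f y) := fun y ↦ by
    by_cases hy : ψ (Real.exp (-y)) = 0
    · simp [hy]
    · exact neg_nonneg.2 (mul_nonpos_of_nonneg_of_nonpos (sq_nonneg _) (hb ((hsupp y).1 hy)).le)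
  obtain ⟨B, hB⟩ := isCompact_Icc.exists_bound_of_continuousOn (s := Set.Icc 0 1) hψ.continuousOn
  have hint : IntegrableOn (fun y ↦ -(ψ (Real.exp (-y)) ^ 2 * f y)) (Set.Ioi 0) := by
    refine (hd.integrableOn_mul hf (K := B ^ 2) (c := 0) (by fun_prop) fun y hy ↦ ?_).neg
    rw [zero_mul, Real.exp_zero, mul_one, abs_pow]
    gcongr
    exact hB _ ⟨(Real.exp_pos _).le, Real.exp_le_one_iff.2 (by linarith)⟩
  have hpos : 0 < ∫ y in Set.Ioi 0, -(ψ (Real.exp (-y)) ^ 2 * f y) := by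
    refine (setIntegral_pos_iff_support_of_nonneg_ae (Eventually.of_forall hle) hint).2 ?_
    refine lt_of_lt_of_le (Real.volume_Ioo ▸ ENNReal.ofReal_pos.2 (sub_pos.2 hab))
      (measure_mono fun y hy ↦ ⟨?_, ha.trans_lt hy.1⟩)
    exact neg_ne_zero.2 (mul_ne_zero (pow_ne_zero 2 ((hsupp y).2 hy)) (hb hy).ne)
  rw [integral_neg] at hpos
  linarith [hd.integral_sq_comp_exp_neg_mul_nonneg hf h hψ]

end MomentPositivity

section Hankel

/-- The integrand `e^σ σ^p` of Hankel's integral for `1 / Γ(-p)`. -/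
noncomputable def hankelKernel (p : ℝ) (σ : ℂ) : ℂ := Complex.exp σ * σ ^ (p : ℂ)

variable {θ a : ℝ}

lemma measurable_hankelKernel_ray (p θ a : ℝ) :
    Measurable fun ρ ↦ Complex.exp (θ * Complex.I) * hankelKernel p (ray θ a ρ) := by
  unfold hankelKernel; fun_prop

lemma hankelKernel_ofReal (p : ℝ) {x : ℝ} (hx : 0 ≤ x) :
    hankelKernel p x = (Real.exp x * x ^ p : ℝ) := by
  rw [hankelKernel]; push_cast [Complex.ofReal_cpow hx]; rfl

lemma norm_hankelKernel_ray (p θ a ρ : ℝ) :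
    ‖hankelKernel p (ray θ a ρ)‖ =
      Real.exp a * Real.exp (Real.cos θ * ρ) * ‖ray θ a ρ‖ ^ p := by
  rw [hankelKernel, norm_mul, norm_cexp_ray, Complex.norm_cpow_real]

lemma hasDerivAt_hankelKernel (p : ℝ) {σ : ℂ} (hσ : σ ∈ Complex.slitPlane) :
    HasDerivAt (hankelKernel p) (hankelKernel p σ + p * hankelKernel (p - 1) σ) σ := by
  convert! (Complex.hasDerivAt_exp σ).mul ((hasDerivAt_id σ).cpow_const (c := (p : ℂ)) hσ) using 1
  simp only [hankelKernel, id_eq]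
  push_cast; ring

lemma cos_neg_of_mem_Ioo (hθ : θ ∈ Set.Ioo (π / 2) π) : Real.cos θ < 0 :=
  Real.cos_neg_of_pi_div_two_lt_of_lt hθ.1 (by linarith [hθ.2, pi_pos])

lemma cos_half_pos_of_mem_Ioo (hθ : θ ∈ Set.Ioo (π / 2) π) : 0 < Real.cos (θ / 2) :=
  Real.cos_pos_of_mem_Ioo ⟨by linarith [hθ.1, pi_pos], by linarith [hθ.2]⟩

lemma mem_Ioo_zero_pi (hθ : θ ∈ Set.Ioo (π / 2) π) : θ ∈ Set.Ioo 0 π :=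
  ⟨pi_div_two_pos.trans hθ.1, hθ.2⟩

lemma exists_norm_hankelKernel_ray_le (hθ : θ ∈ Set.Ioo (π / 2) π) {a₁ : ℝ} (ha₁ : 0 < a₁)
    (a₂ p₁ p₂ : ℝ) : ∃ C, ∀ p ∈ Set.Icc p₁ p₂, ∀ a ∈ Set.Icc a₁ a₂, ∀ ρ, 0 < ρ →
      ‖hankelKernel p (ray θ a ρ)‖ ≤ C * Real.exp (Real.cos θ / 2 * ρ) := by
  have hcos := cos_neg_of_mem_Ioo hθ
  have hhalf := cos_half_pos_of_mem_Ioo hθ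
  obtain ⟨C₁, hC₁, h₁⟩ := exists_rpow_le_mul_exp p₁ (mul_pos hhalf ha₁)
    (ε := -(Real.cos θ / 2)) (by linarith)
  obtain ⟨C₂, hC₂, h₂⟩ := exists_rpow_le_mul_exp p₂ (mul_pos hhalf ha₁)
    (ε := -(Real.cos θ / 2)) (by linarith)
  refine ⟨Real.exp a₂ * ((C₁ + C₂) * Real.exp (-(Real.cos θ / 2) * a₂)),
    fun p hp a ha ρ hρ ↦ ?_⟩
  have ha0 : 0 < a := ha₁.trans_le ha.1
  have hlow : Real.cos (θ / 2) * a₁ ≤ ‖ray θ a ρ‖ :=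
    (mul_le_mul_of_nonneg_left (by linarith [ha.1]) hhalf.le).trans
      (cos_half_mul_le_norm_ray θ a ρ)
  have hpow : ‖ray θ a ρ‖ ^ p ≤
      (C₁ + C₂) * Real.exp (-(Real.cos θ / 2) * a₂) * Real.exp (-(Real.cos θ / 2) * ρ) := calc
    ‖ray θ a ρ‖ ^ p ≤ ‖ray θ a ρ‖ ^ p₁ + ‖ray θ a ρ‖ ^ p₂ :=
      rpow_le_rpow_add_rpow_exponent ((mul_pos hhalf ha₁).trans_le hlow) hp.1 hp.2
    _ ≤ (C₁ + C₂) * Real.exp (-(Real.cos θ / 2) * ‖ray θ a ρ‖) := by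
      linarith [h₁ _ hlow, h₂ _ hlow]
    _ ≤ (C₁ + C₂) * Real.exp (-(Real.cos θ / 2) * (a₂ + ρ)) := by
      have := (norm_ray_le (θ := θ) ha0.le hρ.le).trans (add_le_add_left ha.2 ρ)
      gcongr
      linarith
    _ = _ := by rw [mul_add, Real.exp_add, mul_assoc]
  calc ‖hankelKernel p (ray θ a ρ)‖
    _ = Real.exp a * Real.exp (Real.cos θ * ρ) * ‖ray θ a ρ‖ ^ p := norm_hankelKernel_ray p θ a ρ
    _ ≤ Real.exp a₂ * Real.exp (Real.cos θ * ρ) * ((C₁ + C₂) *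
          Real.exp (-(Real.cos θ / 2) * a₂) * Real.exp (-(Real.cos θ / 2) * ρ)) := by
      gcongr; exact ha.2
    _ = Real.exp a₂ * ((C₁ + C₂) * Real.exp (-(Real.cos θ / 2) * a₂)) *
          (Real.exp (Real.cos θ * ρ) * Real.exp (-(Real.cos θ / 2) * ρ)) := by ring
    _ = _ := by rw [← Real.exp_add]; ring_nf

lemma integrableOn_exp_half_cos_mul (hθ : θ ∈ Set.Ioo (π / 2) π) (C : ℝ) :
    IntegrableOn (fun ρ ↦ C * Real.exp (Real.cos θ / 2 * ρ)) (Set.Ioi 0) :=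
  (integrableOn_exp_mul_Ioi (by linarith [cos_neg_of_mem_Ioo hθ]) 0).const_mul C

lemma integrableOn_hankelKernel_ray (hθ : θ ∈ Set.Ioo (π / 2) π) (ha : 0 < a) (p : ℝ) :
    IntegrableOn (fun ρ ↦ Complex.exp (θ * Complex.I) * hankelKernel p (ray θ a ρ))
      (Set.Ioi 0) := by
  obtain ⟨C, hC⟩ := exists_norm_hankelKernel_ray_le hθ ha a p p
  refine (integrableOn_exp_half_cos_mul hθ C).mono'
    (measurable_hankelKernel_ray p θ a).aestronglyMeasurable ?_
  filter_upwards [ae_restrict_mem measurableSet_Ioi] with ρ hρ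
  rw [norm_mul, Complex.norm_exp_ofReal_mul_I, one_mul]
  exact hC p (Set.left_mem_Icc.2 le_rfl) a (Set.left_mem_Icc.2 le_rfl) ρ hρ

lemma rayIntegral_hankelKernel_add (hθ : θ ∈ Set.Ioo (π / 2) π) (ha : 0 < a) (p : ℝ) :
    rayIntegral θ a (hankelKernel p) + p * rayIntegral θ a (hankelKernel (p - 1)) =
      -(Real.exp a * a ^ p : ℝ) := by
  have hderiv : ∀ ρ, 0 ≤ ρ → HasDerivAt (fun ρ ↦ hankelKernel p (ray θ a ρ))
      (Complex.exp (θ * Complex.I) * hankelKernel p (ray θ a ρ) +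
        p * (Complex.exp (θ * Complex.I) * hankelKernel (p - 1) (ray θ a ρ))) ρ := by
    intro ρ hρ
    have hslit := ray_mem_slitPlane (mem_Ioo_zero_pi hθ) hρ (add_pos_of_pos_of_nonneg ha hρ)
    convert! (hasDerivAt_hankelKernel p hslit).comp ρ (hasDerivAt_ray θ a ρ) using 1
    ring
  have hlim : Tendsto (fun ρ ↦ hankelKernel p (ray θ a ρ)) atTop (𝓝 0) := by
    obtain ⟨C, hC⟩ := exists_norm_hankelKernel_ray_le hθ ha a p p
    refine squeeze_zero_norm' (a := fun ρ ↦ C * Real.exp (Real.cos θ / 2 * ρ)) ?_ ?_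
    · filter_upwards [eventually_gt_atTop 0] with ρ hρ
      exact hC p (Set.left_mem_Icc.2 le_rfl) a (Set.left_mem_Icc.2 le_rfl) ρ hρ
    · simpa using (Real.tendsto_exp_atBot.comp (tendsto_id.const_mul_atTop_of_neg
        (show Real.cos θ / 2 < 0 by linarith [cos_neg_of_mem_Ioo hθ]))).const_mul C
  have hint := integrableOn_hankelKernel_ray hθ ha p
  have hint' := (integrableOn_hankelKernel_ray hθ ha (p - 1)).const_mul (p : ℂ)
  have hftc := integral_Ioi_of_hasDerivAt_of_tendsto' hderiv (hint.add hint') hlim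
  rw [integral_add hint hint', integral_const_mul (p : ℂ), ray_zero_right,
    hankelKernel_ofReal p ha.le, zero_sub] at hftc
  exact hftc

lemma hasDerivAt_rayIntegral_hankelKernel (hθ : θ ∈ Set.Ioo (π / 2) π) (ha : 0 < a) (p : ℝ) :
    HasDerivAt (fun a ↦ rayIntegral θ a (hankelKernel p)) (-(Real.exp a * a ^ p : ℝ)) a := by
  obtain ⟨C, hC⟩ := exists_norm_hankelKernel_ray_le hθ (half_pos ha) (2 * a) (p - 1) p
  have h := (hasDerivAt_integral_of_dominated_loc_of_deriv_le
    (F := fun a ρ ↦ Complex.exp (θ * Complex.I) * hankelKernel p (ray θ a ρ))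
    (F' := fun a ρ ↦ Complex.exp (θ * Complex.I) * hankelKernel p (ray θ a ρ) +
      p * (Complex.exp (θ * Complex.I) * hankelKernel (p - 1) (ray θ a ρ)))
    (bound := fun ρ ↦ ((1 + |p|) * C) * Real.exp (Real.cos θ / 2 * ρ))
    (Icc_mem_nhds (half_lt_self ha) (lt_two_mul_self ha))
    (Eventually.of_forall fun a ↦ (measurable_hankelKernel_ray p θ a).aestronglyMeasurable)
    (integrableOn_hankelKernel_ray hθ ha p)
    ((measurable_hankelKernel_ray p θ a).add
      ((measurable_hankelKernel_ray (p - 1) θ a).const_mul _)).aestronglyMeasurable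
    ?_ (integrableOn_exp_half_cos_mul hθ _) ?_).2
  · rw [integral_add (integrableOn_hankelKernel_ray hθ ha p)
      ((integrableOn_hankelKernel_ray hθ ha (p - 1)).const_mul _), integral_const_mul (p : ℂ)] at h
    exact rayIntegral_hankelKernel_add hθ ha p ▸ h
  · filter_upwards [ae_restrict_mem measurableSet_Ioi] with ρ hρ x hx
    refine (norm_add_le _ _).trans ?_
    simp only [norm_mul, Complex.norm_exp_ofReal_mul_I, one_mul, Complex.norm_real,
      Real.norm_eq_abs]
    have h₀ := hC p ⟨by linarith, le_rfl⟩ x hx ρ hρ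
    have h₁ := hC (p - 1) ⟨le_rfl, by linarith⟩ x hx ρ hρ
    linarith [mul_le_mul_of_nonneg_left h₁ (abs_nonneg p)]
  · filter_upwards [ae_restrict_mem measurableSet_Ioi] with ρ hρ x hx
    have hslit := ray_mem_slitPlane (a := x) (mem_Ioo_zero_pi hθ) (le_of_lt hρ)
      (add_pos ((half_pos ha).trans_le hx.1) hρ)
    convert! ((hasDerivAt_hankelKernel p hslit).comp x
      (hasDerivAt_ray_start θ x ρ)).const_mul (Complex.exp (θ * Complex.I)) using 1
    ring

lemma im_rayIntegral_hankelKernel_eq (hθ : θ ∈ Set.Ioo (π / 2) π) (p : ℝ) {a b : ℝ} (ha : 0 < a)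
    (hb : 0 < b) :
    (rayIntegral θ a (hankelKernel p)).im = (rayIntegral θ b (hankelKernel p)).im := by
  have hderiv : ∀ x ∈ Set.Ioi (0 : ℝ),
      HasDerivAt (fun a ↦ (rayIntegral θ a (hankelKernel p)).im) 0 x := fun x hx ↦ by
    simpa using! Complex.imCLM.hasFDerivAt.comp_hasDerivAt x
      (hasDerivAt_rayIntegral_hankelKernel hθ hx p)
  exact isOpen_Ioi.is_const_of_deriv_eq_zero isPreconnected_Ioi
    (fun x hx ↦ (hderiv x hx).differentiableAt.differentiableWithinAt)
    (fun x hx ↦ (hderiv x hx).deriv) ha hb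

lemma im_rayIntegral_hankelKernel_sub_one (hθ : θ ∈ Set.Ioo (π / 2) π) (ha : 0 < a) (p : ℝ) :
    (rayIntegral θ a (hankelKernel p)).im =
      -p * (rayIntegral θ a (hankelKernel (p - 1))).im := by
  have h := congrArg Complex.im (rayIntegral_hankelKernel_add hθ ha p)
  simp only [Complex.add_im, Complex.im_ofReal_mul, Complex.neg_im, Complex.ofReal_im,
    neg_zero] at h
  linarith

lemma continuous_rayIntegral_hankelKernel (hθ : θ ∈ Set.Ioo (π / 2) π) (ha : 0 < a) :
    Continuous fun p ↦ rayIntegral θ a (hankelKernel p) := by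
  refine continuous_iff_continuousAt.2 fun p₀ ↦ ?_
  obtain ⟨C, hC⟩ := exists_norm_hankelKernel_ray_le hθ ha a (p₀ - 1) (p₀ + 1)
  refine continuousAt_of_dominated (bound := fun ρ ↦ C * Real.exp (Real.cos θ / 2 * ρ))
    (Eventually.of_forall fun p ↦ (measurable_hankelKernel_ray p θ a).aestronglyMeasurable) ?_
    (integrableOn_exp_half_cos_mul hθ C) ?_
  · filter_upwards [Icc_mem_nhds (sub_one_lt p₀) (lt_add_one p₀)] with p hp
    filter_upwards [ae_restrict_mem measurableSet_Ioi] with ρ hρ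
    rw [norm_mul, Complex.norm_exp_ofReal_mul_I, one_mul]
    exact hC p hp a (Set.left_mem_Icc.2 le_rfl) ρ hρ
  · filter_upwards [ae_restrict_mem measurableSet_Ioi] with ρ hρ
    have hne := ray_ne_zero (mem_Ioo_zero_pi hθ) (le_of_lt hρ) (add_pos ha hρ)
    unfold hankelKernel
    have : ContinuousAt (fun p : ℝ ↦ ray θ a ρ ^ (p : ℂ)) p₀ :=
      (continuousAt_const_cpow hne).comp Complex.continuous_ofReal.continuousAt
    fun_prop

lemma integrableOn_exp_mul_rpow_add_rpow (hθ : θ ∈ Set.Ioo (π / 2) π) {p : ℝ} (hp : -1 < p) :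
    IntegrableOn (fun ρ ↦ Real.exp 1 * Real.exp (Real.cos θ * ρ) *
      ((Real.cos (θ / 2) * ρ) ^ p + (1 + ρ) ^ p)) (Set.Ioi 0) := by
  have hcos := cos_neg_of_mem_Ioo hθ
  have hhalf := cos_half_pos_of_mem_Ioo hθ
  obtain ⟨C, _, hbound⟩ := exists_rpow_le_mul_exp p one_pos
    (ε := -(Real.cos θ / 2)) (by linarith)
  have hlow : IntegrableOn (fun ρ ↦ Real.exp (Real.cos θ * ρ) * (Real.cos (θ / 2) * ρ) ^ p)
      (Set.Ioi 0) := by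
    have hΓ := (integrableOn_rpow_sub_one_mul_exp_Ioi (s := p + 1) (by linarith) hcos).const_mul
      (Real.cos (θ / 2) ^ p)
    refine IntegrableOn.congr_fun hΓ (fun ρ hρ ↦ ?_) measurableSet_Ioi
    simp only [Real.mul_rpow hhalf.le (le_of_lt hρ), add_sub_cancel_right]
    ring
  have hupp : IntegrableOn (fun ρ ↦ Real.exp (Real.cos θ * ρ) * (1 + ρ) ^ p) (Set.Ioi 0) := by
    refine (integrableOn_exp_half_cos_mul hθ (C * Real.exp (-(Real.cos θ / 2)))).mono'
      (by fun_prop) ?_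
    filter_upwards [ae_restrict_mem measurableSet_Ioi] with ρ (hρ : 0 < ρ)
    rw [Real.norm_of_nonneg (by positivity)]
    calc Real.exp (Real.cos θ * ρ) * (1 + ρ) ^ p
      _ ≤ Real.exp (Real.cos θ * ρ) * (C * Real.exp (-(Real.cos θ / 2) * (1 + ρ))) := by
        gcongr; exact hbound _ (by linarith)
      _ = C * Real.exp (-(Real.cos θ / 2)) * Real.exp (Real.cos θ / 2 * ρ) := by
        rw [mul_left_comm, ← Real.exp_add, mul_assoc, ← Real.exp_add]; ring_nf
  refine IntegrableOn.congr_fun ((hlow.add hupp).const_mul (Real.exp 1)) (fun ρ _ ↦ ?_)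
    measurableSet_Ioi
  simp only [Pi.add_apply]; ring

lemma tendsto_rayIntegral_hankelKernel_zero (hθ : θ ∈ Set.Ioo (π / 2) π) {p : ℝ} (hp : -1 < p) :
    Tendsto (fun a ↦ rayIntegral θ a (hankelKernel p)) (𝓝[>] 0)
      (𝓝 (rayIntegral θ 0 (hankelKernel p))) := by
  have hhalf := cos_half_pos_of_mem_Ioo hθ
  refine tendsto_integral_filter_of_dominated_convergence _
    (Eventually.of_forall fun a ↦ (measurable_hankelKernel_ray p θ a).aestronglyMeasurable)
    ?_ (integrableOn_exp_mul_rpow_add_rpow hθ hp) ?_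
  · filter_upwards [Ioc_mem_nhdsGT one_pos] with a ha
    filter_upwards [ae_restrict_mem measurableSet_Ioi] with ρ (hρ : 0 < ρ)
    rw [norm_mul, Complex.norm_exp_ofReal_mul_I, one_mul, norm_hankelKernel_ray]
    gcongr
    · exact ha.2
    · refine rpow_le_rpow_add_rpow (mul_pos hhalf hρ) ?_ ?_
      · exact (mul_le_mul_of_nonneg_left (by linarith [ha.1]) hhalf.le).trans
          (cos_half_mul_le_norm_ray θ a ρ)
      · exact (norm_ray_le ha.1.le hρ.le).trans (by linarith [ha.2])
  · filter_upwards [ae_restrict_mem measurableSet_Ioi] with ρ (hρ : 0 < ρ)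
    have hslit := ray_mem_slitPlane (a := 0) (mem_Ioo_zero_pi hθ) hρ.le (by simpa using hρ)
    have hcont : ContinuousAt (fun a ↦ hankelKernel p (ray θ a ρ)) 0 :=
      (hasDerivAt_hankelKernel p hslit).continuousAt.comp
        (f := fun a ↦ ray θ a ρ) (hasDerivAt_ray_start θ 0 ρ).continuousAt
    exact (hcont.tendsto.const_mul _).mono_left nhdsWithin_le_nhds

lemma cpow_ray_zero_left (hθ : θ ∈ Set.Ioo 0 π) (p : ℝ) {ρ : ℝ} (hρ : 0 < ρ) :
    ray θ 0 ρ ^ (p : ℂ) = (ρ ^ p : ℝ) * Complex.exp (p * (θ * Complex.I)) := by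
  have hlog : Complex.log (Complex.exp (θ * Complex.I)) = θ * Complex.I :=
    Complex.log_exp (by simpa using by linarith [hθ.1, pi_pos]) (by simpa using hθ.2.le)
  have hne : Complex.exp (θ * Complex.I) ≠ 0 := Complex.exp_ne_zero _
  rw [ray, Complex.ofReal_zero, zero_add, Complex.cpow_def_of_ne_zero
    (mul_ne_zero (Complex.ofReal_ne_zero.2 hρ.ne') hne), Complex.log_ofReal_mul hρ hne, hlog,
    Real.rpow_def_of_pos hρ, Complex.ofReal_exp, ← Complex.exp_add]
  push_cast; ring_nf

lemma rayIntegral_zero_hankelKernel (hθ : θ ∈ Set.Ioo (π / 2) π) {p : ℝ} (hp : -1 < p) :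
    rayIntegral θ 0 (hankelKernel p) =
      Complex.exp ((π * (p + 1) : ℝ) * Complex.I) * Real.Gamma (p + 1) := by
  have hre : (Complex.exp (θ * Complex.I)).re < 0 := by
    rw [Complex.exp_ofReal_mul_I_re]; exact cos_neg_of_mem_Ioo hθ
  have hneg : -Complex.exp (θ * Complex.I) = Complex.exp ((θ - π : ℝ) * Complex.I) := by
    push_cast
    rw [sub_mul, Complex.exp_sub, Complex.exp_pi_mul_I, div_neg, div_one]
  have hlog : Complex.log (-Complex.exp (θ * Complex.I)) = (θ - π : ℝ) * Complex.I := by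
    rw [hneg]
    exact Complex.log_exp (by simpa using by linarith [hθ.1, pi_pos])
      (by simpa using by linarith [hθ.2, pi_pos])
  calc rayIntegral θ 0 (hankelKernel p)
    _ = ∫ ρ in Set.Ioi (0 : ℝ), Complex.exp ((p + 1) * (θ * Complex.I)) *
          (((ρ ^ (p + 1 - 1) : ℝ) : ℂ) * Complex.exp (Complex.exp (θ * Complex.I) * ρ)) := by
      refine setIntegral_congr_fun measurableSet_Ioi fun ρ hρ ↦ ?_
      simp only [hankelKernel, cpow_ray_zero_left (mem_Ioo_zero_pi hθ) p hρ]
      rw [add_mul, Complex.exp_add, one_mul, add_sub_cancel_right, ray, Complex.ofReal_zero,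
        zero_add, mul_comm (ρ : ℂ)]
      ring
    _ = Complex.exp ((p + 1) * (θ * Complex.I)) *
          ((-Complex.exp (θ * Complex.I)) ^ (-(p + 1 : ℝ) : ℂ) * Real.Gamma (p + 1)) := by
      rw [integral_const_mul, integral_rpow_mul_cexp_mul_Ioi (by linarith) hre]
    _ = Complex.exp ((π * (p + 1) : ℝ) * Complex.I) * Real.Gamma (p + 1) := by
      rw [Complex.cpow_def_of_ne_zero (neg_ne_zero.2 (Complex.exp_ne_zero _)), hlog, ← mul_assoc,
        ← Complex.exp_add]
      push_cast; ring_nf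

lemma sin_pi_mul_Gamma_div_pi {s : ℝ} (hs : 0 < s) :
    Real.sin (π * s) * Real.Gamma s / π = (Real.Gamma (1 - s))⁻¹ := by
  have hΓ := (Real.Gamma_pos_of_pos hs).ne'
  have h : (Real.Gamma (1 - s))⁻¹ = Real.Gamma s * (Real.Gamma s * Real.Gamma (1 - s))⁻¹ := by
    rw [mul_inv, ← mul_assoc, mul_inv_cancel₀ hΓ, one_mul]
  rw [h, Real.Gamma_mul_Gamma_one_sub, inv_div]
  ring

lemma continuous_inv_Gamma_neg : Continuous fun p : ℝ ↦ (Real.Gamma (-p))⁻¹ := by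
  have h : Continuous fun p : ℝ ↦ ((Complex.Gamma (-p : ℝ))⁻¹).re :=
    Complex.continuous_re.comp (Complex.differentiable_one_div_Gamma.continuous.comp
      (Complex.continuous_ofReal.comp continuous_neg))
  refine h.congr fun p ↦ ?_
  rw [Complex.Gamma_ofReal, ← Complex.ofReal_inv, Complex.ofReal_re]

lemma im_rayIntegral_hankelKernel_div_pi_of_neg_one_lt (hθ : θ ∈ Set.Ioo (π / 2) π)
    (ha : 0 < a) {p : ℝ} (hp : -1 < p) :
    (rayIntegral θ a (hankelKernel p)).im / π = (Real.Gamma (-p))⁻¹ := by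
  have hlim := (Complex.continuous_im.tendsto _).comp
    (tendsto_rayIntegral_hankelKernel_zero hθ hp)
  have hconst : Tendsto (Complex.im ∘ fun a ↦ rayIntegral θ a (hankelKernel p)) (𝓝[>] 0)
      (𝓝 (rayIntegral θ a (hankelKernel p)).im) := by
    refine tendsto_const_nhds.congr' ?_
    filter_upwards [self_mem_nhdsWithin] with b hb
    exact im_rayIntegral_hankelKernel_eq hθ p ha hb
  rw [tendsto_nhds_unique hconst hlim, rayIntegral_zero_hankelKernel hθ hp,
    Complex.im_mul_ofReal, Complex.exp_ofReal_mul_I_im,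
    sin_pi_mul_Gamma_div_pi (by linarith : 0 < p + 1)]
  ring_nf

theorem im_rayIntegral_hankelKernel_div_pi (hθ : θ ∈ Set.Ioo (π / 2) π) (ha : 0 < a) (p : ℝ) :
    (rayIntegral θ a (hankelKernel p)).im / π = (Real.Gamma (-p))⁻¹ := by
  have hge : ∀ p, -1 ≤ p → (rayIntegral θ a (hankelKernel p)).im / π = (Real.Gamma (-p))⁻¹ :=
    fun p hp ↦ Set.EqOn.closure (s := Set.Ioi (-1))
      (fun p hp ↦ im_rayIntegral_hankelKernel_div_pi_of_neg_one_lt hθ ha hp)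
      ((Complex.continuous_im.comp
        (continuous_rayIntegral_hankelKernel hθ ha)).div_const π) continuous_inv_Gamma_neg
      (by rwa [closure_Ioi])
  have hstep : ∀ n : ℕ, ∀ p, -1 - (n : ℝ) ≤ p →
      (rayIntegral θ a (hankelKernel p)).im / π = (Real.Gamma (-p))⁻¹ := by
    intro n
    induction n with
    | zero => simpa using hge
    | succ n ih =>
      intro p hp
      rcases le_or_gt (-1) p with h | h
      · exact hge p h
      have hrec := im_rayIntegral_hankelKernel_sub_one hθ ha (p + 1)
      have hind := ih (p + 1) (by push_cast at hp; linarith)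
      have hΓ : Real.Gamma (-p) = -(p + 1) * Real.Gamma (-(p + 1)) := by
        rw [← Real.Gamma_add_one (by linarith), neg_add, neg_add_cancel_right]
      rw [add_sub_cancel_right] at hrec
      rw [hΓ, mul_inv, ← hind, hrec, mul_div_assoc,
        inv_mul_cancel_left₀ (by linarith : 0 < -(p + 1)).ne']
  obtain ⟨n, hn⟩ := exists_nat_ge (-1 - p)
  exact hstep n p (by linarith)

end Hankel

section Mainardi

/-- The Mainardi function `M_α(r) = W_{-α,1-α}(-r)`, the density that subordinates the
time-fractional heat semigroup to the classical one. -/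
noncomputable def mainardi (α r : ℝ) : ℝ := wrightFn (-α) (1 - α) (-r)

/-- The integrand of the Hankel contour representation of `mainardi α r`. -/
noncomputable def mainardiKernel (α r : ℝ) (σ : ℂ) : ℂ :=
  hankelKernel (α - 1) σ * Complex.exp (-(r * σ ^ (α : ℂ)))

variable {α θ a ρ : ℝ}

lemma exists_mem_Ioo_mul_lt_pi_div_two (hα : α ∈ Set.Ioo 0 1) :
    ∃ θ ∈ Set.Ioo (π / 2) π, α * θ < π / 2 := by
  have h1α : 0 < 1 + α := by linarith [hα.1]
  refine ⟨π / (1 + α), ⟨?_, ?_⟩, ?_⟩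
  · exact div_lt_div_of_pos_left pi_pos h1α (by linarith [hα.2])
  · exact div_lt_self pi_pos (by linarith [hα.1])
  · rw [mul_div_assoc', div_lt_div_iff₀ h1α two_pos]
    nlinarith [hα.2, pi_pos]

lemma exists_mul_rpow_le_add (hα : α ∈ Set.Ioo 0 1) {r ε : ℝ} (hr : 0 ≤ r) (hε : 0 < ε) :
    ∃ C, ∀ x, 0 ≤ x → r * x ^ α ≤ C + ε * x := by
  have h1α : 0 < 1 - α := sub_pos.2 hα.2
  set B := (r * ε ^ (-α)) ^ (1 / (1 - α)) with hB
  have hB0 : 0 ≤ B := by positivity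
  refine ⟨B, fun x hx ↦ ?_⟩
  have hεx : 0 ≤ ε * x := by positivity
  calc r * x ^ α
    _ = (ε * x) ^ α * B ^ (1 - α) := by
      rw [hB, ← Real.rpow_mul (by positivity), one_div_mul_cancel h1α.ne', Real.rpow_one,
        Real.mul_rpow hε.le hx, Real.rpow_neg hε.le]
      field_simp
    _ ≤ α * (ε * x) + (1 - α) * B :=
      Real.geom_mean_le_arith_mean2_weighted hα.1.le h1α.le hεx hB0 (by ring)
    _ ≤ B + ε * x := by nlinarith [hα.1, hα.2]

lemma arg_ray_mem_Icc (hθ : θ ∈ Set.Ioo 0 π) (ha : 0 ≤ a) (hρ : 0 ≤ ρ) (h : 0 < a + ρ) :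
    Complex.arg (ray θ a ρ) ∈ Set.Icc 0 θ := by
  have hsin := Real.sin_pos_of_mem_Ioo hθ
  have hnonneg : 0 ≤ Complex.arg (ray θ a ρ) := by
    rw [Complex.arg_nonneg_iff, ray_im]; positivity
  refine ⟨hnonneg, not_lt.1 fun hlt ↦ ?_⟩
  have hpos : 0 < Real.sin (Complex.arg (ray θ a ρ) - θ) :=
    Real.sin_pos_of_pos_of_lt_pi (by linarith) (by linarith [Complex.arg_le_pi (ray θ a ρ), hθ.1])
  have hrot : ‖ray θ a ρ‖ * Real.sin (Complex.arg (ray θ a ρ) - θ) = -(a * Real.sin θ) := by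
    have hre := Complex.norm_mul_cos_arg (ray θ a ρ)
    have him := Complex.norm_mul_sin_arg (ray θ a ρ)
    rw [ray_re] at hre
    rw [ray_im] at him
    rw [Real.sin_sub]
    linear_combination Real.cos θ * him - Real.sin θ * hre
  have hnorm := norm_pos_iff.2 (ray_ne_zero hθ hρ h)
  linarith [mul_pos hnorm hpos, mul_nonneg ha hsin.le]

lemma cos_mul_norm_rpow_le_re_cpow_ray (hα : α ∈ Set.Ioo 0 1) (hθ : θ ∈ Set.Ioo 0 π)
    (ha : 0 < a) (hρ : 0 ≤ ρ) :
    Real.cos (α * θ) * ‖ray θ a ρ‖ ^ α ≤ (ray θ a ρ ^ (α : ℂ)).re := by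
  obtain ⟨harg0, hargθ⟩ := arg_ray_mem_Icc hθ ha.le hρ (add_pos_of_pos_of_nonneg ha hρ)
  rw [Complex.cpow_ofReal_re, mul_comm, mul_comm _ α]
  gcongr
  exact Real.cos_le_cos_of_nonneg_of_le_pi (mul_nonneg hα.1.le harg0)
    ((mul_le_of_le_one_left hθ.1.le hα.2.le).trans hθ.2.le)
    (mul_le_mul_of_nonneg_left hargθ hα.1.le)

lemma cos_mul_pos (hα : α ∈ Set.Ioo 0 1) (hθ : θ ∈ Set.Ioo (π / 2) π) (hαθ : α * θ < π / 2) :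
    0 < Real.cos (α * θ) :=
  Real.cos_pos_of_mem_Ioo ⟨by linarith [mul_pos hα.1 (mem_Ioo_zero_pi hθ).1, pi_pos], hαθ⟩

/-- A lower bound for `Re σ^α` along `ray θ a`: the decay rate of `mainardiKernel α r` in `r`. -/
noncomputable def mainardiRate (α θ a : ℝ) : ℝ :=
  Real.cos (α * θ) * (Real.cos (θ / 2) * a) ^ α

lemma mainardiRate_pos (hα : α ∈ Set.Ioo 0 1) (hθ : θ ∈ Set.Ioo (π / 2) π) (hαθ : α * θ < π / 2)
    (ha : 0 < a) : 0 < mainardiRate α θ a :=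
  mul_pos (cos_mul_pos hα hθ hαθ) (Real.rpow_pos_of_pos (mul_pos (cos_half_pos_of_mem_Ioo hθ) ha) α)

lemma mainardiRate_le_re_cpow_ray (hα : α ∈ Set.Ioo 0 1) (hθ : θ ∈ Set.Ioo (π / 2) π)
    (hαθ : α * θ < π / 2) (ha : 0 < a) (hρ : 0 ≤ ρ) :
    mainardiRate α θ a ≤ (ray θ a ρ ^ (α : ℂ)).re := by
  have hhalf := cos_half_pos_of_mem_Ioo hθ
  refine le_trans (mul_le_mul_of_nonneg_left (Real.rpow_le_rpow (by positivity) ?_ hα.1.le)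
    (cos_mul_pos hα hθ hαθ).le) (cos_mul_norm_rpow_le_re_cpow_ray hα (mem_Ioo_zero_pi hθ) ha hρ)
  exact (mul_le_mul_of_nonneg_left (by linarith) hhalf.le).trans (cos_half_mul_le_norm_ray θ a ρ)

lemma norm_mainardiKernel_ray_le (hα : α ∈ Set.Ioo 0 1) (hθ : θ ∈ Set.Ioo (π / 2) π)
    (hαθ : α * θ < π / 2) (ha : 0 < a) (hρ : 0 ≤ ρ) {r : ℝ} (hr : 0 ≤ r) :
    ‖mainardiKernel α r (ray θ a ρ)‖ ≤
      ‖hankelKernel (α - 1) (ray θ a ρ)‖ * Real.exp (-(mainardiRate α θ a * r)) := by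
  rw [mainardiKernel, norm_mul, Complex.norm_exp, Complex.neg_re, Complex.re_ofReal_mul]
  rw [mul_comm _ r]
  gcongr
  exact mainardiRate_le_re_cpow_ray hα hθ hαθ ha hρ

lemma hankelKernel_mul_cpow_pow (p α : ℝ) (n : ℕ) {σ : ℂ} (hσ : σ ≠ 0) :
    hankelKernel p σ * (σ ^ (α : ℂ)) ^ n = hankelKernel (p + n * α) σ := by
  rw [hankelKernel, hankelKernel, mul_assoc, ← Complex.cpow_nat_mul, ← Complex.cpow_add _ _ hσ]
  push_cast; rfl

lemma integrableOn_norm_hankelKernel_mul_exp (hα : α ∈ Set.Ioo 0 1) (hθ : θ ∈ Set.Ioo (π / 2) π)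
    (ha : 0 < a) (r : ℝ) :
    IntegrableOn (fun ρ ↦ ‖hankelKernel (α - 1) (ray θ a ρ)‖ *
      Real.exp (|r| * ‖ray θ a ρ‖ ^ α)) (Set.Ioi 0) := by
  have hcos := cos_neg_of_mem_Ioo hθ
  obtain ⟨C, hC⟩ := exists_norm_hankelKernel_ray_le hθ ha a (α - 1) (α - 1)
  obtain ⟨D, hD⟩ := exists_mul_rpow_le_add hα (abs_nonneg r) (ε := -(Real.cos θ / 4)) (by linarith)
  have hexp : IntegrableOn (fun ρ ↦ C * Real.exp (D - Real.cos θ / 4 * a) *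
      Real.exp (Real.cos θ / 4 * ρ)) (Set.Ioi 0) :=
    (integrableOn_exp_mul_Ioi (by linarith) 0).const_mul _
  refine hexp.mono' (Measurable.aestronglyMeasurable
    (by unfold hankelKernel; fun_prop)) ?_
  filter_upwards [ae_restrict_mem measurableSet_Ioi] with ρ (hρ : 0 < ρ)
  have hK := hC (α - 1) (Set.left_mem_Icc.2 le_rfl) a (Set.left_mem_Icc.2 le_rfl) ρ hρ
  have hpow : |r| * ‖ray θ a ρ‖ ^ α ≤ D - Real.cos θ / 4 * a - Real.cos θ / 4 * ρ := by
    nlinarith [hD _ (norm_nonneg (ray θ a ρ)), norm_ray_le (θ := θ) ha.le hρ.le]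
  rw [Real.norm_of_nonneg (by positivity)]
  calc ‖hankelKernel (α - 1) (ray θ a ρ)‖ * Real.exp (|r| * ‖ray θ a ρ‖ ^ α)
    _ ≤ C * Real.exp (Real.cos θ / 2 * ρ) *
          Real.exp (D - Real.cos θ / 4 * a - Real.cos θ / 4 * ρ) := by
      gcongr; exact (norm_nonneg _).trans hK
    _ = _ := by
      rw [mul_assoc, ← Real.exp_add, mul_assoc, ← Real.exp_add]; ring_nf

lemma hasSum_rayIntegral_mainardiKernel (hα : α ∈ Set.Ioo 0 1) (hθ : θ ∈ Set.Ioo (π / 2) π)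
    (ha : 0 < a) (r : ℝ) :
    HasSum (fun n : ℕ ↦ (((-r) ^ n / n.factorial : ℝ) : ℂ) *
      rayIntegral θ a (hankelKernel (α - 1 + n * α))) (rayIntegral θ a (mainardiKernel α r)) := by
  have hsummable : ∀ ρ, HasSum (fun n : ℕ ↦ ‖hankelKernel (α - 1) (ray θ a ρ)‖ *
      ((|r| * ‖ray θ a ρ‖ ^ α) ^ n / n.factorial))
      (‖hankelKernel (α - 1) (ray θ a ρ)‖ * Real.exp (|r| * ‖ray θ a ρ‖ ^ α)) := fun ρ ↦
    (Real.exp_eq_exp_ℝ ▸ NormedSpace.expSeries_div_hasSum_exp _).mul_left _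
  simp only [rayIntegral, ← integral_const_mul]
  refine hasSum_integral_of_dominated_convergence (fun n ρ ↦
    ‖hankelKernel (α - 1) (ray θ a ρ)‖ * ((|r| * ‖ray θ a ρ‖ ^ α) ^ n / n.factorial))
    (fun n ↦ ((measurable_hankelKernel_ray _ θ a).const_mul _).aestronglyMeasurable)
    (fun n ↦ ?_) (Eventually.of_forall fun ρ ↦ (hsummable ρ).summable) ?_ ?_
  · filter_upwards [ae_restrict_mem measurableSet_Ioi] with ρ hρ
    have hne := ray_ne_zero (mem_Ioo_zero_pi hθ) (le_of_lt hρ) (add_pos ha hρ)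
    rw [← hankelKernel_mul_cpow_pow _ _ _ hne]
    simp only [norm_mul, norm_pow, Complex.norm_exp_ofReal_mul_I, Complex.norm_cpow_real,
      Complex.norm_real, norm_div, norm_neg, Real.norm_eq_abs, Nat.abs_cast]
    exact le_of_eq (by ring)
  · refine (integrableOn_norm_hankelKernel_mul_exp hα hθ ha r).congr_fun (fun ρ _ ↦ ?_)
      measurableSet_Ioi
    exact (hsummable ρ).tsum_eq.symm
  · filter_upwards [ae_restrict_mem measurableSet_Ioi] with ρ hρ
    have hne := ray_ne_zero (mem_Ioo_zero_pi hθ) (le_of_lt hρ) (add_pos ha hρ)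
    have hexp := (Complex.exp_eq_exp_ℂ ▸ NormedSpace.expSeries_div_hasSum_exp
      (-(r * ray θ a ρ ^ (α : ℂ)))).mul_left
      (Complex.exp (θ * Complex.I) * hankelKernel (α - 1) (ray θ a ρ))
    rw [mainardiKernel, ← mul_assoc]
    refine hexp.congr_fun fun n ↦ ?_
    rw [← hankelKernel_mul_cpow_pow _ _ _ hne]
    push_cast
    ring

theorem mainardi_eq_im_rayIntegral (hα : α ∈ Set.Ioo 0 1) (hθ : θ ∈ Set.Ioo (π / 2) π)
    (ha : 0 < a) (r : ℝ) :
    mainardi α r = (rayIntegral θ a (mainardiKernel α r)).im / π := by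
  have him := ((Complex.imCLM.hasSum (hasSum_rayIntegral_mainardiKernel hα hθ ha r)).div_const π)
  refine (tsum_congr fun n ↦ ?_).trans him.tsum_eq
  rw [Complex.imCLM_apply, Complex.im_ofReal_mul, mul_div_assoc,
    im_rayIntegral_hankelKernel_div_pi hθ ha]
  ring_nf

lemma aestronglyMeasurable_mainardiKernel_ray (α θ a r : ℝ) :
    AEStronglyMeasurable (fun ρ ↦ Complex.exp (θ * Complex.I) * mainardiKernel α r (ray θ a ρ))
      (volume.restrict (Set.Ioi 0)) :=
  Measurable.aestronglyMeasurable (by unfold mainardiKernel hankelKernel; fun_prop)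

lemma continuousOn_mainardi (hα : α ∈ Set.Ioo 0 1) : ContinuousOn (mainardi α) (Set.Ici 0) := by
  obtain ⟨θ, hθ, hαθ⟩ := exists_mem_Ioo_mul_lt_pi_div_two hα
  have hcont : ContinuousOn (fun r ↦ rayIntegral θ 1 (mainardiKernel α r)) (Set.Ici 0) := by
    refine continuousOn_of_dominated
      (fun r _ ↦ aestronglyMeasurable_mainardiKernel_ray α θ 1 r)
      (fun r (hr : 0 ≤ r) ↦ ?_) (integrableOn_hankelKernel_ray hθ one_pos (α - 1)).norm
      (Eventually.of_forall fun ρ ↦ Continuous.continuousOn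
        (by unfold mainardiKernel; fun_prop))
    filter_upwards [ae_restrict_mem measurableSet_Ioi] with ρ (hρ : 0 < ρ)
    simp only [norm_mul, Complex.norm_exp_ofReal_mul_I, one_mul]
    refine (norm_mainardiKernel_ray_le hα hθ hαθ one_pos hρ.le hr).trans
      (mul_le_of_le_one_right (norm_nonneg _) (Real.exp_le_one_iff.2 ?_))
    have := mainardiRate_pos hα hθ hαθ one_pos
    rw [Left.neg_nonpos_iff]; positivity
  exact ((Complex.continuous_im.comp_continuousOn hcont).div_const π).congr
    fun r _ ↦ mainardi_eq_im_rayIntegral hα hθ one_pos r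

lemma exists_abs_mainardi_le_mul_exp_mainardiRate (hα : α ∈ Set.Ioo 0 1)
    (hθ : θ ∈ Set.Ioo (π / 2) π) (hαθ : α * θ < π / 2) (ha : 0 < a) :
    ∃ C, 0 ≤ C ∧ ∀ r, 0 ≤ r → |mainardi α r| ≤ C * Real.exp (-(mainardiRate α θ a * r)) := by
  refine ⟨(∫ ρ in Set.Ioi 0, ‖Complex.exp (θ * Complex.I) * hankelKernel (α - 1) (ray θ a ρ)‖) / π,
    by positivity, fun r hr ↦ ?_⟩
  rw [mainardi_eq_im_rayIntegral hα hθ ha, abs_div, abs_of_pos pi_pos, div_mul_eq_mul_div]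
  gcongr
  refine (Complex.abs_im_le_norm _).trans ?_
  rw [rayIntegral, ← integral_mul_const]
  refine norm_integral_le_of_norm_le ((integrableOn_hankelKernel_ray hθ ha _).norm.mul_const _) ?_
  filter_upwards [ae_restrict_mem measurableSet_Ioi] with ρ hρ
  simp only [norm_mul, Complex.norm_exp_ofReal_mul_I, one_mul]
  exact norm_mainardiKernel_ray_le hα hθ hαθ ha (le_of_lt hρ) hr

lemma exists_le_mainardiRate (hα : α ∈ Set.Ioo 0 1) (hθ : θ ∈ Set.Ioo (π / 2) π)
    (hαθ : α * θ < π / 2) (l : ℝ) : ∃ a, 0 < a ∧ l ≤ mainardiRate α θ a := by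
  have hlim : Tendsto (mainardiRate α θ) atTop atTop :=
    ((tendsto_rpow_atTop hα.1).comp
      (tendsto_id.const_mul_atTop (cos_half_pos_of_mem_Ioo hθ))).const_mul_atTop
      (cos_mul_pos hα hθ hαθ)
  exact ((eventually_gt_atTop 0).and (hlim.eventually_ge_atTop l)).exists

theorem superexpDecay_mainardi (hα : α ∈ Set.Ioo 0 1) : SuperexpDecay (mainardi α) := fun l ↦ by
  obtain ⟨θ, hθ, hαθ⟩ := exists_mem_Ioo_mul_lt_pi_div_two hα
  obtain ⟨a, ha, hl⟩ := exists_le_mainardiRate hα hθ hαθ l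
  obtain ⟨C, hC, hM⟩ := exists_abs_mainardi_le_mul_exp_mainardiRate hα hθ hαθ ha
  exact ⟨C, fun r hr ↦ (hM r hr).trans (by gcongr)⟩

lemma integral_pow_mul_mainardiKernel_ray (hα : α ∈ Set.Ioo 0 1) (hθ : θ ∈ Set.Ioo (π / 2) π)
    (hαθ : α * θ < π / 2) (ha : 0 < a) (hρ : 0 ≤ ρ) (n : ℕ) :
    ∫ r in Set.Ioi (0 : ℝ), ((r ^ n : ℝ) : ℂ) * mainardiKernel α r (ray θ a ρ) =
      n.factorial * hankelKernel (-(α * n + 1)) (ray θ a ρ) := by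
  have hne := ray_ne_zero (mem_Ioo_zero_pi hθ) hρ (add_pos_of_pos_of_nonneg ha hρ)
  have hre : (-(ray θ a ρ ^ (α : ℂ))).re < 0 := by
    rw [Complex.neg_re, neg_lt_zero]
    exact (mainardiRate_pos hα hθ hαθ ha).trans_le (mainardiRate_le_re_cpow_ray hα hθ hαθ ha hρ)
  have hgamma := integral_rpow_mul_cexp_mul_Ioi (s := n + 1) (by positivity) hre
  simp only [add_sub_cancel_right, Real.rpow_natCast, neg_neg, Real.Gamma_nat_eq_factorial,
    Complex.ofReal_natCast] at hgamma
  calc ∫ r in Set.Ioi (0 : ℝ), ((r ^ n : ℝ) : ℂ) * mainardiKernel α r (ray θ a ρ)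
    _ = ∫ r in Set.Ioi (0 : ℝ), hankelKernel (α - 1) (ray θ a ρ) *
          (((r ^ n : ℝ) : ℂ) * Complex.exp (-(ray θ a ρ ^ (α : ℂ)) * r)) := by
      simp only [mainardiKernel]; congr 1 with r; ring_nf
    _ = _ := by
      have hpow : hankelKernel (-(α * n + 1)) (ray θ a ρ) * (ray θ a ρ ^ (α : ℂ)) ^ (n + 1) =
          hankelKernel (α - 1) (ray θ a ρ) := by
        rw [hankelKernel_mul_cpow_pow _ _ _ hne]; push_cast; ring_nf
      have hne' : ray θ a ρ ^ (α : ℂ) ≠ 0 := by simp [Complex.cpow_eq_zero_iff, hne]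
      rw [integral_const_mul, hgamma, ← hpow, show -((n + 1 : ℝ) : ℂ) = -((n + 1 : ℕ) : ℂ) by
        push_cast; rfl, Complex.cpow_neg, Complex.cpow_natCast]
      field_simp

lemma integrable_pow_mul_mainardiKernel_ray (hα : α ∈ Set.Ioo 0 1) (hθ : θ ∈ Set.Ioo (π / 2) π)
    (hαθ : α * θ < π / 2) (ha : 0 < a) (n : ℕ) :
    Integrable (fun z : ℝ × ℝ ↦ ((z.1 ^ n : ℝ) : ℂ) *
        (Complex.exp (θ * Complex.I) * mainardiKernel α z.1 (ray θ a z.2)))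
      ((volume.restrict (Set.Ioi 0)).prod (volume.restrict (Set.Ioi 0))) := by
  have hpow := integrableOn_rpow_sub_one_mul_exp_Ioi (s := n + 1) (by positivity)
    (neg_lt_zero.2 (mainardiRate_pos hα hθ hαθ ha))
  have hbound := hpow.mul_prod (integrableOn_hankelKernel_ray hθ ha (α - 1)).norm
  refine hbound.mono' (Measurable.aestronglyMeasurable
    (by unfold mainardiKernel hankelKernel; fun_prop)) ?_
  rw [Measure.prod_restrict]
  filter_upwards [ae_restrict_mem (measurableSet_Ioi.prod measurableSet_Ioi)] with z hz
  simp only [norm_mul, Complex.norm_exp_ofReal_mul_I, one_mul, add_sub_cancel_right,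
    Real.rpow_natCast, Complex.norm_real, Real.norm_of_nonneg (pow_nonneg (le_of_lt hz.1) n)]
  have hz0 : 0 ≤ z.1 := le_of_lt hz.1
  calc z.1 ^ n * ‖mainardiKernel α z.1 (ray θ a z.2)‖
    _ ≤ z.1 ^ n * (‖hankelKernel (α - 1) (ray θ a z.2)‖ *
          Real.exp (-(mainardiRate α θ a * z.1))) := by
      gcongr
      exact norm_mainardiKernel_ray_le hα hθ hαθ ha (le_of_lt hz.2) hz0
    _ = _ := by ring_nf

theorem integral_pow_mul_mainardi (hα : α ∈ Set.Ioo 0 1) (n : ℕ) :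
    ∫ r in Set.Ioi 0, r ^ n * mainardi α r = n.factorial / Real.Gamma (α * n + 1) := by
  obtain ⟨θ, hθ, hαθ⟩ := exists_mem_Ioo_mul_lt_pi_div_two hα
  have hint := integrable_pow_mul_mainardiKernel_ray hα hθ hαθ one_pos n
  have hswap : ∫ r in Set.Ioi (0 : ℝ), ((r ^ n : ℝ) : ℂ) * rayIntegral θ 1 (mainardiKernel α r) =
      n.factorial * rayIntegral θ 1 (hankelKernel (-(α * n + 1))) := by
    simp only [rayIntegral, ← integral_const_mul]
    rw [integral_integral_swap hint]
    refine setIntegral_congr_fun measurableSet_Ioi fun ρ (hρ : 0 < ρ) ↦ ?_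
    simp only [mul_left_comm _ (Complex.exp _)]
    rw [integral_const_mul, integral_pow_mul_mainardiKernel_ray hα hθ hαθ one_pos hρ.le]
  have hint' : IntegrableOn (fun r : ℝ ↦ ((r ^ n : ℝ) : ℂ) * rayIntegral θ 1 (mainardiKernel α r))
      (Set.Ioi 0) := by
    simpa only [IntegrableOn, rayIntegral, ← integral_const_mul] using hint.integral_prod_left
  calc ∫ r in Set.Ioi 0, r ^ n * mainardi α r
    _ = (∫ r in Set.Ioi (0 : ℝ),
          ((r ^ n : ℝ) : ℂ) * rayIntegral θ 1 (mainardiKernel α r)).im / π := by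
      rw [← Complex.imCLM_apply, ← Complex.imCLM.integral_comp_comm hint', ← integral_div]
      congr 1 with r
      rw [Complex.imCLM_apply, Complex.im_ofReal_mul, mainardi_eq_im_rayIntegral hα hθ one_pos,
        mul_div_assoc]
    _ = n.factorial / Real.Gamma (α * n + 1) := by
      rw [hswap, ← Complex.ofReal_natCast, Complex.im_ofReal_mul, mul_div_assoc,
        im_rayIntegral_hankelKernel_div_pi hθ one_pos, neg_neg, div_eq_mul_inv]

end Mainardi

section NegBinomial

/-- The power series `(1 - X)^(-s)`, whose coefficients are the multichoose numbers of `s`. -/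
noncomputable def negBinomialSeries (s : ℝ) : PowerSeries ℝ :=
  PowerSeries.rescale (-1) (PowerSeries.binomialSeries ℝ (-s))

lemma coeff_negBinomialSeries (s : ℝ) (n : ℕ) :
    PowerSeries.coeff n (negBinomialSeries s) = Ring.multichoose s n := by
  rw [negBinomialSeries, PowerSeries.coeff_rescale, PowerSeries.binomialSeries_coeff,
    Ring.choose_neg, ← Ring.multichoose_eq, smul_eq_mul, mul_one, Units.smul_def, zsmul_eq_mul,
    ← mul_assoc, Int.cast_negOnePow_natCast, ← mul_pow, neg_one_mul, neg_neg, one_pow, one_mul]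

lemma negBinomialSeries_add (s t : ℝ) :
    negBinomialSeries (s + t) = negBinomialSeries s * negBinomialSeries t := by
  rw [negBinomialSeries, neg_add, PowerSeries.binomialSeries_add, map_mul]; rfl

lemma negBinomialSeries_zero : negBinomialSeries 0 = 1 := by
  rw [negBinomialSeries, neg_zero, PowerSeries.binomialSeries_zero, map_one]

lemma negBinomialSeries_nat_mul (n : ℕ) (s : ℝ) :
    negBinomialSeries (n * s) = negBinomialSeries s ^ n := by
  induction n with
  | zero => simp [negBinomialSeries_zero]
  | succ n ih => rw [Nat.cast_succ, add_one_mul, negBinomialSeries_add, ih, pow_succ]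

lemma multichoose_eq_prod_div_factorial (s : ℝ) (n : ℕ) :
    Ring.multichoose s n = (∏ i ∈ Finset.range n, (s + i)) / n.factorial := by
  rw [eq_div_iff (by positivity), mul_comm, ← nsmul_eq_mul,
    Ring.factorial_nsmul_multichoose_eq_ascPochhammer]
  rw [Polynomial.ascPochhammer_smeval_eq_eval]
  induction n with
  | zero => simp
  | succ n ih => rw [Finset.prod_range_succ, ← ih, ascPochhammer_succ_eval]

lemma multichoose_nonneg {s : ℝ} (hs : 0 ≤ s) (n : ℕ) : 0 ≤ Ring.multichoose s n := by
  rw [multichoose_eq_prod_div_factorial]; positivity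

lemma multichoose_neg_nonpos {s : ℝ} (hs : s ∈ Set.Icc 0 1) {n : ℕ} (hn : n ≠ 0) :
    Ring.multichoose (-s) n ≤ 0 := by
  obtain ⟨n, rfl⟩ := Nat.exists_eq_succ_of_ne_zero hn
  rw [multichoose_eq_prod_div_factorial, Finset.prod_range_succ']
  refine div_nonpos_of_nonpos_of_nonneg (mul_nonpos_of_nonneg_of_nonpos
    (Finset.prod_nonneg fun i _ ↦ ?_) (by simpa using hs.1)) (by positivity)
  push_cast
  linarith [hs.2, (Nat.cast_nonneg i : (0 : ℝ) ≤ i)]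

lemma tendsto_multichoose_div_rpow {s : ℝ} (hs : 0 < s) :
    Tendsto (fun n : ℕ ↦ Ring.multichoose s n / (n : ℝ) ^ (s - 1)) atTop
      (𝓝 (Real.Gamma s)⁻¹) := by
  have hratio : Tendsto (fun n : ℕ ↦ (n : ℝ) / (n + s)) atTop (𝓝 1) :=
    tendsto_natCast_div_add_atTop s
  have hlim := ((Real.GammaSeq_tendsto_Gamma s).inv₀ (Real.Gamma_pos_of_pos hs).ne').mul hratio
  rw [mul_one] at hlim
  refine hlim.congr' ?_
  filter_upwards [eventually_gt_atTop 0] with n hn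
  have hn' : (0 : ℝ) < n := Nat.cast_pos.2 hn
  rw [Real.GammaSeq, Finset.prod_range_succ, multichoose_eq_prod_div_factorial,
    Real.rpow_sub_one hn'.ne', add_comm s n]
  field_simp

end NegBinomial

section PowerSeriesCoeff

lemma coeff_mul_nonneg {f g : PowerSeries ℝ} (hf : ∀ n, 0 ≤ PowerSeries.coeff n f)
    (hg : ∀ n, 0 ≤ PowerSeries.coeff n g) (n : ℕ) : 0 ≤ PowerSeries.coeff n (f * g) := by
  rw [PowerSeries.coeff_mul]
  exact Finset.sum_nonneg fun i _ ↦ mul_nonneg (hf _) (hg _)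

lemma coeff_pow_nonneg {f : PowerSeries ℝ} (hf : ∀ n, 0 ≤ PowerSeries.coeff n f) (k n : ℕ) :
    0 ≤ PowerSeries.coeff n (f ^ k) := by
  induction k generalizing n with
  | zero => rw [pow_zero, PowerSeries.coeff_one]; split_ifs <;> norm_num
  | succ k ih => rw [pow_succ]; exact coeff_mul_nonneg ih hf n

lemma coeff_mul_subst {R : Type*} [CommRing R] {w : PowerSeries R}
    (hw : PowerSeries.constantCoeff w = 0) (f g : PowerSeries R) (n : ℕ) :
    PowerSeries.coeff n (g * f.subst w) =
      ∑ k ∈ Finset.range (n + 1), PowerSeries.coeff k f * PowerSeries.coeff n (g * w ^ k) := by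
  have hsubst := PowerSeries.HasSubst.of_constantCoeff_zero' hw
  have hdvd : PowerSeries.X ^ (n + 1) ∣ w ^ (n + 1) :=
    pow_dvd_pow_of_dvd (PowerSeries.X_dvd_iff.2 hw) _
  have hsplit := congrArg (PowerSeries.subst w) (f.eq_X_pow_mul_shift_add_trunc (n + 1))
  rw [PowerSeries.subst_add hsubst, PowerSeries.subst_mul hsubst, PowerSeries.subst_pow hsubst,
    PowerSeries.subst_X hsubst, PowerSeries.subst_coe hsubst] at hsplit
  rw [hsplit, mul_add, map_add, mul_left_comm,
    PowerSeries.X_pow_dvd_iff.1 (hdvd.mul_right _) n n.lt_succ_self, zero_add,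
    Polynomial.aeval_eq_sum_range' (f.natDegree_trunc_lt n), Finset.mul_sum, map_sum]
  refine Finset.sum_congr rfl fun k hk ↦ ?_
  rw [mul_smul_comm, PowerSeries.coeff_smul, PowerSeries.coeff_trunc,
    if_pos (Finset.mem_range.1 hk), smul_eq_mul]

end PowerSeriesCoeff

section RenewalWeights

variable {α : ℝ}

/-- The coefficient of `X^n` in `(1 - X)^(α - 1) (1 - (1 - X)^α)^k`. After rescaling `k` by `n^α`
these weights on `k` are a discrete approximation of the density `mainardi α`. -/
noncomputable def renewalWeight (α : ℝ) (n k : ℕ) : ℝ :=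
  PowerSeries.coeff n (negBinomialSeries (1 - α) * (1 - negBinomialSeries (-α)) ^ k)

lemma coeff_one_sub_negBinomialSeries_nonneg (hα : α ∈ Set.Icc 0 1) (n : ℕ) :
    0 ≤ PowerSeries.coeff n (1 - negBinomialSeries (-α)) := by
  rw [map_sub, PowerSeries.coeff_one, coeff_negBinomialSeries]
  rcases eq_or_ne n 0 with rfl | hn
  · simp
  · simpa [hn] using multichoose_neg_nonpos hα hn

lemma renewalWeight_nonneg (hα : α ∈ Set.Icc 0 1) (n k : ℕ) : 0 ≤ renewalWeight α n k :=
  coeff_mul_nonneg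
    (fun n ↦ coeff_negBinomialSeries (1 - α) n ▸ multichoose_nonneg (sub_nonneg.2 hα.2) n)
    (coeff_pow_nonneg (coeff_one_sub_negBinomialSeries_nonneg hα) k) n

lemma constantCoeff_one_sub_negBinomialSeries (s : ℝ) :
    PowerSeries.constantCoeff (1 - negBinomialSeries s) = 0 := by
  rw [← PowerSeries.coeff_zero_eq_constantCoeff_apply, map_sub, coeff_negBinomialSeries]
  simp

lemma subst_one_sub_negBinomialSeries_neg (α : ℝ) (j : ℕ) :
    (PowerSeries.mk fun k ↦ ((j + k).choose j : ℝ)).subst (1 - negBinomialSeries (-α)) =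
      negBinomialSeries (α * (j + 1)) := by
  have hsubst := PowerSeries.HasSubst.of_constantCoeff_zero'
    (constantCoeff_one_sub_negBinomialSeries (-α))
  have hinv : (PowerSeries.mk fun k ↦ ((j + k).choose j : ℝ)).subst (1 - negBinomialSeries (-α)) *
      negBinomialSeries (-α) ^ (j + 1) = 1 := by
    have h := congrArg (PowerSeries.substAlgHom hsubst)
      (PowerSeries.mk_add_choose_mul_one_sub_pow_eq_one ℝ j)
    rw [map_mul, map_pow, map_sub, map_one, PowerSeries.substAlgHom_X, sub_sub_cancel] at h
    rwa [← PowerSeries.coe_substAlgHom hsubst]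
  have hinv' : negBinomialSeries (-α) ^ (j + 1) * negBinomialSeries (α * (j + 1)) = 1 := by
    rw [← negBinomialSeries_nat_mul, ← negBinomialSeries_add, ← negBinomialSeries_zero]
    push_cast; ring_nf
  exact left_inv_eq_right_inv hinv hinv'

lemma sum_choose_mul_renewalWeight (α : ℝ) (n j : ℕ) :
    ∑ k ∈ Finset.range (n + 1), ((j + k).choose j : ℝ) * renewalWeight α n k =
      Ring.multichoose (α * j + 1) n := by
  have h := coeff_mul_subst (constantCoeff_one_sub_negBinomialSeries (-α))
    (PowerSeries.mk fun k ↦ ((j + k).choose j : ℝ)) (negBinomialSeries (1 - α)) n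
  rw [subst_one_sub_negBinomialSeries_neg, ← negBinomialSeries_add, coeff_negBinomialSeries] at h
  simp only [PowerSeries.coeff_mk] at h
  rw [show α * j + 1 = 1 - α + α * (j + 1) by ring]
  exact h.symm

/-- Integration of polynomials against the weights `renewalWeight α n`, as a linear functional, so
that its asymptotics on monomials follow from those on rising factorials. -/
noncomputable def renewalSum (α : ℝ) (n : ℕ) : Polynomial ℝ →ₗ[ℝ] ℝ :=
  ∑ k ∈ Finset.range (n + 1), renewalWeight α n k • Polynomial.leval (k : ℝ)

lemma renewalSum_apply (α : ℝ) (n : ℕ) (P : Polynomial ℝ) :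
    renewalSum α n P = ∑ k ∈ Finset.range (n + 1), renewalWeight α n k * P.eval (k : ℝ) := by
  simp [renewalSum]

lemma renewalSum_ascPochhammer (α : ℝ) (n j : ℕ) :
    renewalSum α n ((ascPochhammer ℝ j).comp (Polynomial.X + 1)) =
      j.factorial * Ring.multichoose (α * j + 1) n := by
  rw [renewalSum_apply, ← sum_choose_mul_renewalWeight, Finset.mul_sum]
  refine Finset.sum_congr rfl fun k _ ↦ ?_
  have hasc : (ascPochhammer ℝ j).eval ((k : ℝ) + 1) = j.factorial * (j + k).choose j := by
    have h := ascPochhammer_nat_eq_natCast_ascFactorial ℝ (k + 1) j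
    rw [Nat.ascFactorial_eq_factorial_mul_choose, add_comm k j] at h
    exact_mod_cast h
  rw [Polynomial.eval_comp, Polynomial.eval_add, Polynomial.eval_X, Polynomial.eval_one, hasc]
  ring

lemma tendsto_renewalSum_ascPochhammer (hα : 0 ≤ α) (j : ℕ) :
    Tendsto (fun n : ℕ ↦ renewalSum α n ((ascPochhammer ℝ j).comp (Polynomial.X + 1)) /
      (n : ℝ) ^ (α * j)) atTop (𝓝 (j.factorial / Real.Gamma (α * j + 1))) := by
  have h := (tendsto_multichoose_div_rpow (s := α * j + 1) (by positivity)).const_mul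
    (j.factorial : ℝ)
  simpa only [renewalSum_ascPochhammer, add_sub_cancel_right, mul_div_assoc, ← div_eq_mul_inv]
    using h

lemma degree_sub_ascPochhammer_comp_lt {P : Polynomial ℝ} {j : ℕ} (hP : P.degree < (j + 1 : ℕ)) :
    (P - Polynomial.C (P.coeff j) * (ascPochhammer ℝ j).comp (Polynomial.X + 1)).degree < j := by
  have hmonic := (monic_ascPochhammer ℝ j).comp_X_add_C 1
  have hdeg : ((ascPochhammer ℝ j).comp (Polynomial.X + Polynomial.C 1)).natDegree = j := by
    rw [Polynomial.natDegree_comp, ascPochhammer_natDegree, Polynomial.natDegree_X_add_C, mul_one]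
  have hlead := hmonic.coeff_natDegree
  rw [hdeg] at hlead
  rw [← map_one Polynomial.C, Polynomial.degree_lt_iff_coeff_zero]
  intro m hm
  rw [Polynomial.coeff_sub, Polynomial.coeff_C_mul]
  rcases hm.eq_or_lt with rfl | hlt
  · rw [hlead, mul_one, sub_self]
  · rw [(Polynomial.degree_lt_iff_coeff_zero _ _).1 hP m hlt,
      Polynomial.coeff_eq_zero_of_natDegree_lt (hdeg.trans_lt hlt), mul_zero, sub_zero]

lemma tendsto_renewalSum_zero (hα : 0 < α) {P : Polynomial ℝ} {j : ℕ} (hP : P.degree < j) :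
    Tendsto (fun n : ℕ ↦ renewalSum α n P / (n : ℝ) ^ (α * j)) atTop (𝓝 0) := by
  induction j generalizing P with
  | zero =>
    have hP0 : P = 0 := Polynomial.degree_eq_bot.1 (Nat.WithBot.lt_zero_iff.1 hP)
    simp [hP0]
  | succ j ih =>
    have hlead := (tendsto_renewalSum_ascPochhammer hα.le j).const_mul (P.coeff j)
    have hscale : Tendsto (fun n : ℕ ↦ (n : ℝ) ^ (-α)) atTop (𝓝 0) :=
      (tendsto_rpow_neg_atTop hα).comp tendsto_natCast_atTop_atTop
    have h := (hlead.add (ih (degree_sub_ascPochhammer_comp_lt hP))).mul hscale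
    rw [mul_zero] at h
    refine h.congr' ?_
    filter_upwards [eventually_gt_atTop 0] with n hn
    rw [← Polynomial.smul_eq_C_mul, map_sub, map_smul, smul_eq_mul, Nat.cast_add_one, mul_add_one,
      Real.rpow_add (by positivity), Real.rpow_neg (by positivity)]
    field_simp
    ring

lemma tendsto_renewalSum_X_pow (hα : 0 < α) (j : ℕ) :
    Tendsto (fun n : ℕ ↦ renewalSum α n (Polynomial.X ^ j) / (n : ℝ) ^ (α * j)) atTop
      (𝓝 (j.factorial / Real.Gamma (α * j + 1))) := by
  have hdeg := degree_sub_ascPochhammer_comp_lt (P := Polynomial.X ^ j) (j := j) (by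
    rw [Polynomial.degree_X_pow]; exact_mod_cast j.lt_succ_self)
  rw [Polynomial.coeff_X_pow_self, map_one, one_mul] at hdeg
  have h := (tendsto_renewalSum_ascPochhammer hα.le j).add (tendsto_renewalSum_zero hα hdeg)
  rw [add_zero] at h
  refine h.congr fun n ↦ ?_
  rw [map_sub]; ring

lemma sum_renewalWeight_mul_eval_div (α : ℝ) (n : ℕ) (P : Polynomial ℝ) :
    ∑ k ∈ Finset.range (n + 1), renewalWeight α n k * P.eval ((k : ℝ) / (n : ℝ) ^ α) =
      ∑ j ∈ Finset.range (P.natDegree + 1),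
        P.coeff j * (renewalSum α n (Polynomial.X ^ j) / (n : ℝ) ^ (α * j)) := by
  simp only [renewalSum_apply, Polynomial.eval_eq_sum_range (p := P), Polynomial.eval_pow,
    Polynomial.eval_X, Finset.mul_sum, Finset.sum_div]
  rw [Finset.sum_comm]
  refine Finset.sum_congr rfl fun j _ ↦ Finset.sum_congr rfl fun k _ ↦ ?_
  rw [Real.rpow_mul_natCast n.cast_nonneg, div_pow]
  ring

theorem sum_coeff_mul_factorial_div_Gamma_nonneg (hα : α ∈ Set.Ioc 0 1) {P : Polynomial ℝ}
    (hP : ∀ y, 0 ≤ y → 0 ≤ P.eval y) :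
    0 ≤ ∑ j ∈ Finset.range (P.natDegree + 1),
      P.coeff j * (j.factorial / Real.Gamma (α * j + 1)) := by
  refine ge_of_tendsto' (tendsto_finsetSum _ fun j _ ↦
    (tendsto_renewalSum_X_pow hα.1 j).const_mul (P.coeff j)) fun n ↦ ?_
  rw [← sum_renewalWeight_mul_eval_div]
  exact Finset.sum_nonneg fun k _ ↦
    mul_nonneg (renewalWeight_nonneg ⟨hα.1.le, hα.2⟩ n k) (hP _ (by positivity))

end RenewalWeights

section MainardiPositivity

variable {α l : ℝ}

lemma integrableOn_pow_mul_mainardi (hα : α ∈ Set.Ioo 0 1) (n : ℕ) :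
    IntegrableOn (fun r ↦ r ^ n * mainardi α r) (Set.Ioi 0) := by
  refine (superexpDecay_mainardi hα).integrableOn_mul (continuousOn_mainardi hα)
    (K := n.factorial) (c := 1) (by fun_prop) fun r hr ↦ ?_
  rw [abs_of_nonneg (by positivity), one_mul]
  exact (div_le_iff₀' (by positivity)).1 (Real.pow_div_factorial_le_exp r hr.le n)

lemma integrableOn_mainardi (hα : α ∈ Set.Ioo 0 1) : IntegrableOn (mainardi α) (Set.Ioi 0) := by
  simpa only [pow_zero, one_mul] using integrableOn_pow_mul_mainardi hα 0

lemma integral_mainardi (hα : α ∈ Set.Ioo 0 1) : ∫ r in Set.Ioi 0, mainardi α r = 1 := by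
  simpa using integral_pow_mul_mainardi hα 0

lemma integral_sum_mul_pow_mul_mainardi (hα : α ∈ Set.Ioo 0 1) (s : Finset ℕ) (a : ℕ → ℝ) :
    ∫ r in Set.Ioi 0, (∑ k ∈ s, a k * r ^ k) * mainardi α r =
      ∑ k ∈ s, a k * (k.factorial / Real.Gamma (α * k + 1)) := by
  simp only [Finset.sum_mul, mul_assoc]
  rw [integral_finsetSum _ fun k _ ↦ (integrableOn_pow_mul_mainardi hα k).const_mul (a k)]
  simp only [integral_const_mul, integral_pow_mul_mainardi hα]

theorem mainardi_nonneg (hα : α ∈ Set.Ioo 0 1) {r : ℝ} (hr : 0 ≤ r) : 0 ≤ mainardi α r := by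
  refine (superexpDecay_mainardi hα).nonneg_of_integral_sq_mul_nonneg (continuousOn_mainardi hα)
    (fun P ↦ ?_) hr
  simp only [← Polynomial.eval_pow]
  simp only [Polynomial.eval_eq_sum_range, integral_sum_mul_pow_mul_mainardi hα]
  refine sum_coeff_mul_factorial_div_Gamma_nonneg (Set.Ioo_subset_Ioc_self hα) fun y _ ↦ ?_
  rw [Polynomial.eval_pow]
  positivity

lemma integrableOn_exp_mul_mainardi (hα : α ∈ Set.Ioo 0 1) (l : ℝ) :
    IntegrableOn (fun r ↦ Real.exp (l * r) * mainardi α r) (Set.Ioi 0) :=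
  (superexpDecay_mainardi hα).integrableOn_mul (continuousOn_mainardi hα) (K := 1) (c := l)
    (by fun_prop) fun r _ ↦ by rw [Real.abs_exp, one_mul]

theorem hasSum_integral_exp_mul_mainardi (hα : α ∈ Set.Ioo 0 1) (hl : 0 ≤ l) :
    HasSum (fun k : ℕ ↦ l ^ k / Real.Gamma (α * k + 1))
      (∫ r in Set.Ioi 0, Real.exp (l * r) * mainardi α r) := by
  have hα0 := hα.1
  rw [hasSum_iff_tendsto_nat_of_nonneg fun k ↦
    div_nonneg (pow_nonneg hl k) (Real.Gamma_nonneg_of_nonneg (by positivity))]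
  have hpartial : ∀ n (r : ℝ), ∑ k ∈ Finset.range n, l ^ k / k.factorial * r ^ k =
      ∑ k ∈ Finset.range n, (l * r) ^ k / k.factorial := fun n r ↦
    Finset.sum_congr rfl fun k _ ↦ by rw [mul_pow]; ring
  refine ((superexpDecay_mainardi hα).tendsto_integral_mul (continuousOn_mainardi hα)
    (K := 1) (c := l) (G := fun n r ↦ ∑ k ∈ Finset.range n, l ^ k / k.factorial * r ^ k)
    (fun n ↦ by fun_prop) (fun n r hr ↦ ?_) (fun r _ ↦ ?_)).congr fun n ↦ ?_
  · rw [hpartial, one_mul, abs_of_nonneg (Finset.sum_nonneg fun k _ ↦ by positivity)]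
    exact Real.sum_le_exp_of_nonneg (by positivity) n
  · simp only [hpartial]
    rw [Real.exp_eq_exp_ℝ]
    exact (NormedSpace.expSeries_div_hasSum_exp (l * r)).tendsto_sum_nat
  · rw [integral_sum_mul_pow_mul_mainardi hα]
    refine Finset.sum_congr rfl fun k _ ↦ ?_
    field_simp

end MainardiPositivity

section MittagLeffler

variable {α τ S : ℝ}

lemma strictMono_natCeil_div (hα : α ∈ Set.Ioc 0 1) :
    StrictMono fun n : ℕ ↦ ⌈(n : ℝ) / α⌉₊ := by
  refine strictMono_nat_of_lt_succ fun n ↦ ?_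
  rw [← Nat.add_one_le_iff, ← Nat.ceil_add_one (div_nonneg n.cast_nonneg hα.1.le)]
  refine Nat.ceil_mono ?_
  rw [Nat.cast_add_one, add_div]
  gcongr
  exact (one_le_div hα.1).2 hα.2

lemma Gamma_mul_natCeil_div_add_one_le (hα : α ∈ Set.Ioc 0 1) (n : ℕ) :
    Real.Gamma (α * ⌈(n : ℝ) / α⌉₊ + 1) ≤ (n + 1).factorial := by
  rcases n.eq_zero_or_pos with rfl | hn
  · simp
  · have hle : (n : ℝ) ≤ α * ⌈(n : ℝ) / α⌉₊ := (div_le_iff₀' hα.1).1 (Nat.le_ceil _)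
    have hlt : α * ⌈(n : ℝ) / α⌉₊ < n + α := by
      calc α * ⌈(n : ℝ) / α⌉₊
        _ < α * (n / α + 1) := by
          gcongr
          · exact hα.1
          · exact Nat.ceil_lt_add_one (div_nonneg n.cast_nonneg hα.1.le)
        _ = n + α := by rw [mul_add_one, mul_div_cancel₀ _ hα.1.ne']
    have hn1 : (1 : ℝ) ≤ n := Nat.one_le_cast.2 hn
    rw [← Real.Gamma_nat_eq_factorial]
    push_cast
    exact Real.Gamma_strictMonoOn_Ici.monotoneOn (Set.mem_Ici.2 (by linarith))
      (Set.mem_Ici.2 (by linarith)) (by linarith [hα.2])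

lemma hasSum_pow_div_factorial_succ (hτ : τ ≠ 0) :
    HasSum (fun n : ℕ ↦ τ ^ n / (n + 1).factorial) ((Real.exp τ - 1) / τ) := by
  have h := NormedSpace.expSeries_div_hasSum_exp τ
  rw [← Real.exp_eq_exp_ℝ, ← hasSum_nat_add_iff' 1] at h
  convert! h.div_const τ using 1
  · ext n
    rw [pow_succ]
    field_simp
  · simp

theorem exp_sub_one_div_le_of_hasSum (hα : α ∈ Set.Ioc 0 1) (hτ : 1 ≤ τ)
    (h : HasSum (fun k : ℕ ↦ (τ ^ α) ^ k / Real.Gamma (α * k + 1)) S) :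
    (Real.exp τ - 1) / τ ≤ S := by
  have hα0 := hα.1
  have hτ0 := one_pos.trans_le hτ
  have hGamma : ∀ k : ℕ, 0 < Real.Gamma (α * k + 1) := fun k ↦ Real.Gamma_pos_of_pos (by positivity)
  refine hasSum_le_inj _ (strictMono_natCeil_div hα).injective
    (fun k _ ↦ div_nonneg (by positivity) (hGamma k).le) (fun n ↦ ?_)
    (hasSum_pow_div_factorial_succ hτ0.ne') h
  refine div_le_div₀ (by positivity) ?_ (hGamma _) (Gamma_mul_natCeil_div_add_one_le hα n)
  rw [← Real.rpow_mul_natCast hτ0.le, ← Real.rpow_natCast]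
  exact Real.rpow_le_rpow_of_exponent_le hτ ((div_le_iff₀' hα0).1 (Nat.le_ceil _))

end MittagLeffler

section HeatKernel

/-- The Gaussian heat kernel of `ℝ^d` at time `s`. -/
noncomputable def heatKernel (d : ℕ) (s : ℝ) (x : EuclideanSpace ℝ (Fin d)) : ℝ :=
  Real.exp (-‖x‖ ^ 2 / (4 * s)) / (4 * π * s) ^ ((d : ℝ) / 2)

variable {d : ℕ} {x : EuclideanSpace ℝ (Fin d)}

lemma heatKernel_nonneg {s : ℝ} (hs : 0 ≤ s) : 0 ≤ heatKernel d s x := by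
  unfold heatKernel; positivity

lemma continuousOn_heatKernel (x : EuclideanSpace ℝ (Fin d)) :
    ContinuousOn (fun s ↦ heatKernel d s x) (Set.Ioi 0) := by
  refine ContinuousOn.div (Real.continuous_exp.comp_continuousOn
    (continuousOn_const.div (by fun_prop) fun s (hs : 0 < s) ↦ by positivity))
    (by fun_prop (disch := positivity)) fun s (hs : 0 < s) ↦ by positivity

lemma exists_heatKernel_le (hx : x ≠ 0) : ∃ K, ∀ s, 0 < s → heatKernel d s x ≤ K := by
  set p := (d : ℝ) / 2
  refine ⟨(p / (π * ‖x‖ ^ 2)) ^ p, fun s hs ↦ ?_⟩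
  have hs' : 0 < (4 * π * s)⁻¹ := by positivity
  have hxp : 0 < π * ‖x‖ ^ 2 := by positivity
  have h := ProbabilityTheory.rpow_abs_le_mul_exp_abs (4 * π * s)⁻¹ (p := p) (by positivity)
    hxp.ne'
  rw [abs_of_pos hs', abs_of_pos hxp] at h
  calc heatKernel d s x
    _ = ((4 * π * s)⁻¹) ^ p / Real.exp (π * ‖x‖ ^ 2 * (4 * π * s)⁻¹) := by
      rw [heatKernel, Real.inv_rpow (by positivity), neg_div, Real.exp_neg,
        show π * ‖x‖ ^ 2 * (4 * π * s)⁻¹ = ‖x‖ ^ 2 / (4 * s) by field_simp]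
      ring
    _ ≤ _ := (div_le_iff₀ (Real.exp_pos _)).2 h

lemma exists_pos_mul_exp_le_exp_mul_heatKernel (d : ℕ) :
    ∃ c, 0 < c ∧ ∀ (x : EuclideanSpace ℝ (Fin d)) τ s, 1 ≤ τ → τ ≤ s →
      c * Real.exp (-‖x‖ ^ 2 / (4 * τ)) * Real.exp (s / 2) ≤ Real.exp s * heatKernel d s x := by
  obtain ⟨C, -, hC⟩ := exists_rpow_le_mul_exp ((d : ℝ) / 2) (l := 4 * π) (ε := 1 / (8 * π))
    (by positivity) (by positivity)
  have hC0 : 0 < C := pos_of_mul_pos_left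
    ((Real.rpow_pos_of_pos (by positivity) _).trans_le (hC _ le_rfl)) (Real.exp_pos _).le
  refine ⟨C⁻¹, inv_pos.2 hC0, fun x τ s hτ hs ↦ ?_⟩
  have hpow : (4 * π * s) ^ ((d : ℝ) / 2) ≤ C * Real.exp (s / 2) := by
    refine (hC _ (le_mul_of_one_le_right (by positivity) (hτ.trans hs))).trans_eq ?_
    congr 2; field_simp; ring
  have hs0 : 0 < s := by linarith
  calc C⁻¹ * Real.exp (-‖x‖ ^ 2 / (4 * τ)) * Real.exp (s / 2)
    _ = Real.exp s * (Real.exp (-‖x‖ ^ 2 / (4 * τ)) / (C * Real.exp (s / 2))) := by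
      rw [show Real.exp s = Real.exp (s / 2) * Real.exp (s / 2) by
        rw [← Real.exp_add, add_halves]]
      field_simp
    _ ≤ Real.exp s * heatKernel d s x := by
      unfold heatKernel
      rw [neg_div, neg_div]
      gcongr

end HeatKernel

section SubordinatedHeatKernel

variable {α t : ℝ} {d : ℕ} {x : EuclideanSpace ℝ (Fin d)}

lemma fundSol_eq_integral_mainardi (α : ℝ) (d : ℕ) (ht : 0 < t) (x : EuclideanSpace ℝ (Fin d)) :
    fundSol α d t x = ∫ r in Set.Ioi 0,
      Real.exp (t ^ α * r) * heatKernel d (t ^ α * r) x * mainardi α r := by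
  have hL : 0 < t ^ α := Real.rpow_pos_of_pos ht α
  have h := integral_comp_mul_left_Ioi
    (fun s ↦ Real.exp s * heatKernel d s x * mainardi α (t ^ (-α) * s)) 0 hL
  rw [mul_zero, smul_eq_mul, ← Real.rpow_neg ht.le] at h
  rw [fundSol]
  refine h.symm.trans ?_
  congr 1 with r
  rw [← mul_assoc (t ^ (-α)), ← Real.rpow_add ht, neg_add_cancel, Real.rpow_zero, one_mul]

lemma integrableOn_exp_mul_heatKernel_mul_mainardi (hα : α ∈ Set.Ioo 0 1) (hx : x ≠ 0) {L : ℝ}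
    (hL : 0 < L) : IntegrableOn
      (fun r ↦ Real.exp (L * r) * heatKernel d (L * r) x * mainardi α r) (Set.Ioi 0) := by
  obtain ⟨K, hK⟩ := exists_heatKernel_le hx
  have hcont : ContinuousOn (fun r ↦ heatKernel d (L * r) x) (Set.Ioi 0) :=
    (continuousOn_heatKernel x).comp (by fun_prop) fun r (hr : 0 < r) ↦ mul_pos hL hr
  refine (superexpDecay_mainardi hα).integrableOn_mul (continuousOn_mainardi hα) (K := K) (c := L)
    (ContinuousOn.mul (by fun_prop) hcont) fun r hr ↦ ?_
  rw [abs_mul, Real.abs_exp, abs_of_nonneg (heatKernel_nonneg (by positivity)), mul_comm]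
  gcongr
  exact hK _ (by positivity)

lemma exists_pos_mul_exp_sub_exp_le (d : ℕ) :
    ∃ c, 0 < c ∧ ∀ (x : EuclideanSpace ℝ (Fin d)) τ s, 1 ≤ τ → 0 ≤ s →
      c * Real.exp (-‖x‖ ^ 2 / (4 * τ)) * (Real.exp (s / 2) - Real.exp (τ / 2)) ≤
        Real.exp s * heatKernel d s x := by
  obtain ⟨c, hc, hle⟩ := exists_pos_mul_exp_le_exp_mul_heatKernel d
  refine ⟨c, hc, fun x τ s hτ hs ↦ ?_⟩
  rcases le_total τ s with h | h
  · refine le_trans ?_ (hle x τ s hτ h)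
    gcongr
    exact sub_le_self _ (Real.exp_pos _).le
  · refine (mul_nonpos_of_nonneg_of_nonpos (by positivity) (sub_nonpos.2 (by gcongr))).trans ?_
    exact mul_nonneg (Real.exp_pos _).le (heatKernel_nonneg hs)

lemma exists_pos_mul_integral_exp_sub_exp_le_fundSol (d : ℕ) :
    ∃ c, 0 < c ∧ ∀ α ∈ Set.Ioo 0 1, ∀ x : EuclideanSpace ℝ (Fin d), x ≠ 0 →
      ∀ t τ, 0 < t → 1 ≤ τ → c * Real.exp (-‖x‖ ^ 2 / (4 * τ)) *
        ((∫ r in Set.Ioi 0, Real.exp (t ^ α / 2 * r) * mainardi α r) - Real.exp (τ / 2)) ≤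
          fundSol α d t x := by
  obtain ⟨c, hc, hle⟩ := exists_pos_mul_exp_sub_exp_le d
  refine ⟨c, hc, fun α hα x hx t τ ht hτ ↦ ?_⟩
  set C := c * Real.exp (-‖x‖ ^ 2 / (4 * τ))
  have hconst : IntegrableOn (fun r ↦ Real.exp (τ / 2) * mainardi α r) (Set.Ioi 0) :=
    (integrableOn_mainardi hα).const_mul _
  have hexp := integrableOn_exp_mul_mainardi hα (t ^ α / 2)
  calc C * ((∫ r in Set.Ioi 0, Real.exp (t ^ α / 2 * r) * mainardi α r) - Real.exp (τ / 2))
    _ = ∫ r in Set.Ioi 0, C * (Real.exp (t ^ α / 2 * r) * mainardi α r -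
          Real.exp (τ / 2) * mainardi α r) := by
      rw [integral_const_mul, integral_sub hexp hconst, integral_const_mul,
        integral_mainardi hα, mul_one]
    _ ≤ ∫ r in Set.Ioi 0, Real.exp (t ^ α * r) * heatKernel d (t ^ α * r) x * mainardi α r := by
      refine setIntegral_mono_on ((hexp.sub hconst).const_mul C)
        (integrableOn_exp_mul_heatKernel_mul_mainardi hα hx (by positivity))
        measurableSet_Ioi fun r (hr : 0 < r) ↦ ?_
      rw [← sub_mul, ← mul_assoc, div_mul_eq_mul_div]
      exact mul_le_mul_of_nonneg_right (hle x τ _ hτ (by positivity)) (mainardi_nonneg hα hr.le)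
    _ = fundSol α d t x := (fundSol_eq_integral_mainardi α d ht x).symm

theorem exists_pos_mul_le_fundSol (d : ℕ) :
    ∃ c, 0 < c ∧ ∀ α ∈ Set.Ioo 0 1, ∀ x : EuclideanSpace ℝ (Fin d), x ≠ 0 →
      ∀ t τ, 0 < t → 1 ≤ τ → τ ^ α = t ^ α / 2 →
        c * Real.exp (-‖x‖ ^ 2 / (4 * τ)) * ((Real.exp τ - 1) / τ - Real.exp (τ / 2)) ≤
          fundSol α d t x := by
  obtain ⟨c, hc, hle⟩ := exists_pos_mul_integral_exp_sub_exp_le_fundSol d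
  refine ⟨c, hc, fun α hα x hx t τ ht hτ hτt ↦ (hle α hα x hx t τ ht hτ).trans' ?_⟩
  gcongr
  rw [← hτt]
  exact exp_sub_one_div_le_of_hasSum (Set.Ioo_subset_Ioc_self hα) hτ
    (hasSum_integral_exp_mul_mainardi hα (by positivity))

end SubordinatedHeatKernel

section Asymptotics

lemma eventually_exp_half_le_exp_sub_one_div_sub :
    ∀ᶠ τ in atTop, Real.exp (τ / 2) ≤ (Real.exp τ - 1) / τ - Real.exp (τ / 2) := by
  have hlin : (fun τ : ℝ ↦ τ) =o[atTop] fun τ ↦ Real.exp (τ / 2) := by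
    simpa only [pow_one, inv_mul_eq_div] using
      isLittleO_pow_exp_pos_mul_atTop 1 (by norm_num : (0 : ℝ) < 2⁻¹)
  filter_upwards [hlin.bound (by norm_num : (0 : ℝ) < 1 / 4), eventually_ge_atTop 1] with τ h hτ
  rw [Real.norm_of_nonneg (by positivity), Real.norm_of_nonneg (by positivity)] at h
  have hsq : Real.exp τ = Real.exp (τ / 2) * Real.exp (τ / 2) := by
    rw [← Real.exp_add, add_halves]
  rw [le_sub_iff_add_le, le_div_iff₀ (by positivity), hsq]
  nlinarith [show 4 ≤ Real.exp (τ / 2) by linarith]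

lemma exp_div_four_le_exp_mul_exp {r τ : ℝ} (hr : 0 ≤ r) (hrτ : r ≤ τ) (hτ : 0 < τ) :
    Real.exp (τ / 4) ≤ Real.exp (-r ^ 2 / (4 * τ)) * Real.exp (τ / 2) := by
  rw [← Real.exp_add]
  refine Real.exp_le_exp.2 ?_
  have hle : -(τ / 4) ≤ -r ^ 2 / (4 * τ) := by
    rw [le_div_iff₀ (by positivity)]
    nlinarith
  linarith

variable {E : Type*} [NormedAddCommGroup E] [NormedSpace ℝ E] {β m : ℝ} {v : E}

lemma isLittleO_mul_rpow_smul (hβ : β < 1) (m : ℝ) (v : E) :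
    (fun t : ℝ ↦ (m * t ^ β) • v) =o[atTop] fun t ↦ t := by
  have hpow : (fun t : ℝ ↦ t ^ β) =o[atTop] fun t ↦ t := by
    refine (Asymptotics.isLittleO_iff_tendsto' ?_).2
      ((tendsto_rpow_neg_atTop (sub_pos.2 hβ)).congr' ?_)
    · filter_upwards [eventually_ne_atTop 0] with t ht h0 using absurd h0 ht
    · filter_upwards [eventually_gt_atTop 0] with t ht
      rw [neg_sub, Real.rpow_sub_one ht.ne']
  have hv : (fun _ : ℝ ↦ v) =O[atTop] fun _ ↦ (1 : ℝ) :=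
    Asymptotics.isBigO_const_const v one_ne_zero atTop
  simpa only [smul_eq_mul, mul_one] using (hpow.const_mul_left m).smul_isBigO hv

lemma eventually_mul_rpow_smul_ne_zero (β : ℝ) (hm : m ≠ 0) (hv : v ≠ 0) :
    ∀ᶠ t : ℝ in atTop, (m * t ^ β) • v ≠ 0 := by
  filter_upwards [eventually_gt_atTop 0] with t ht
  exact smul_ne_zero (mul_ne_zero hm (by positivity)) hv

end Asymptotics

theorem stmt0_general (d : ℕ) (α : ℝ) (hα : α ∈ Set.Ioo (0 : ℝ) 1)
    (x : ℝ → EuclideanSpace ℝ (Fin d)) (hx : x =o[atTop] fun t ↦ t)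
    (hx0 : ∀ᶠ t in atTop, x t ≠ 0) :
    Tendsto (fun t ↦ fundSol α d t (x t)) atTop atTop := by
  obtain ⟨c, hc, hle⟩ := exists_pos_mul_le_fundSol d
  set δ : ℝ := (1 / 2) ^ α⁻¹ with hδ
  have hδ0 : 0 < δ := by positivity
  have hτ : Tendsto (fun t ↦ δ * t) atTop atTop := tendsto_id.const_mul_atTop hδ0
  have hlim : Tendsto (fun t ↦ c * Real.exp (δ * t / 4)) atTop atTop :=
    (Real.tendsto_exp_atTop.comp (hτ.atTop_div_const four_pos)).const_mul_atTop hc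
  refine tendsto_atTop_mono' _ ?_ hlim
  filter_upwards [eventually_gt_atTop 0, hx0, hτ.eventually_ge_atTop 1, hx.bound hδ0,
    hτ.eventually eventually_exp_half_le_exp_sub_one_div_sub] with t ht hxt hτ1 hxb hexp
  refine (hle α hα (x t) hxt t (δ * t) ht hτ1 ?_).trans' ?_
  · rw [Real.mul_rpow hδ0.le ht.le, hδ, Real.rpow_inv_rpow (by norm_num) hα.1.ne']
    ring
  · rw [mul_assoc]
    gcongr
    rw [Real.norm_of_nonneg ht.le] at hxb
    refine (exp_div_four_le_exp_mul_exp (norm_nonneg _) hxb (by positivity)).trans ?_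
    gcongr

theorem stmt0 (d : ℕ) (hd : 1 ≤ d) (α β m : ℝ) (hα : α ∈ Set.Ioo (0 : ℝ) 1)
    (hβ : β ∈ Set.Ioo (0 : ℝ) 1) (hm : 0 < m)
    (v : EuclideanSpace ℝ (Fin d)) (hv : ‖v‖ = 1) :
    Tendsto (fun t : ℝ => fundSol α d t ((m * t ^ β) • v)) atTop atTop := by
  have hv0 : v ≠ 0 := norm_ne_zero_iff.1 (hv ▸ one_ne_zero)
  exact stmt0_general d α hα _ (isLittleO_mul_rpow_smul hβ.2 m v)
    (eventually_mul_rpow_smul_ne_zero β hm.ne' hv0)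
end

section
/- Let d ≥ 1 be an integer, α ∈ (0,1), β > 1, m > 0, and let v ∈ ℝ^d be a unit vector. Then u_{α,1}(t, m t^β v) → 0 as t → ∞. -/
open Real MeasureTheory Filter Topology

/-!
Euler's reflection formula turns the series of `W_{-α,μ}(-z)` into the imaginary part of the
integral of `exp (e^w - z e^{αw} + (1 - μ)w)` over the line `Im w = π`. The integrand is entire, and
real on the real axis, so the contour may follow the real axis up to `log R`, climb to a height `φ`
with `cos φ < 0 < cos (αφ)`, and leave along `Im w = φ`. This gives
`|W_{-α,μ}(-z)| ≤ C exp ((2 - μ)R - c z R^α)` for every `R > 0`. With `z = t^{-α}s` and `R` a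
suitable multiple of `t` the right-hand side is `C exp (kt - 4s)`. The heat kernel is at most
`exp (2s - ‖x‖)` once `d ≤ ‖x‖²`, so integrating against `e^s` yields
`|u(t, x)| ≤ C t^{-α} exp (kt - ‖x‖)`, which tends to zero along every curve that outruns the linear
speed `k`.
-/

section ExponentialCoordinates

variable {E : Type*} [NormedAddCommGroup E]

theorem integrable_exp_smul_comp_exp_iff [NormedSpace ℝ E] (g : ℝ → E) :
    Integrable (fun x => exp x • g (exp x)) ↔ IntegrableOn g (Set.Ioi 0) := by
  symm
  rw [← range_exp, ← Set.image_univ, ← integrableOn_univ]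
  simpa only [abs_exp] using
    integrableOn_image_iff_integrableOn_abs_deriv_smul MeasurableSet.univ
      (fun x _ => (hasDerivAt_exp x).hasDerivWithinAt) exp_injective.injOn g

theorem integral_exp_smul_comp_exp [NormedSpace ℝ E] (g : ℝ → E) :
    ∫ x, exp x • g (exp x) = ∫ u in Set.Ioi 0, g u := by
  symm
  rw [← range_exp, ← Set.image_univ]
  simpa only [abs_exp, setIntegral_univ] using
    integral_image_eq_integral_abs_deriv_smul MeasurableSet.univ
      (fun x _ => (hasDerivAt_exp x).hasDerivWithinAt) exp_injective.injOn g

theorem exp_mul_sub_mul_exp_eq_smul (s r x : ℝ) :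
    exp (s * x - r * exp x) = exp x • (exp x ^ (s - 1) * exp (-(r * exp x))) := by
  rw [smul_eq_mul, ← exp_mul, ← exp_add, ← exp_add]
  ring_nf

theorem integrable_exp_mul_sub_mul_exp {s r : ℝ} (hs : 0 < s) (hr : 0 < r) :
    Integrable (fun x => exp (s * x - r * exp x)) := by
  simp_rw [exp_mul_sub_mul_exp_eq_smul]
  rw [integrable_exp_smul_comp_exp_iff fun u => u ^ (s - 1) * exp (-(r * u))]
  simpa only [rpow_one, neg_mul] using
    integrableOn_rpow_mul_exp_neg_mul_rpow (p := 1) (show -1 < s - 1 by linarith) one_pos hr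

theorem integral_exp_mul_sub_exp {s : ℝ} (hs : 0 < s) :
    ∫ x, exp (s * x - exp x) = Gamma s := by
  have hexp (x : ℝ) := exp_mul_sub_mul_exp_eq_smul s 1 x
  simp only [one_mul] at hexp
  simp_rw [hexp]
  rw [integral_exp_smul_comp_exp fun u => u ^ (s - 1) * exp (-u), Gamma_eq_integral hs]
  simp_rw [mul_comm]

theorem exists_forall_mul_exp_le {a c : ℝ} (ha₀ : 0 ≤ a) (ha₁ : a < 1) (hc : 0 < c) (b : ℝ) :
    ∃ C, ∀ x, b * exp (a * x) ≤ c * exp x + C := by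
  have hlarge : ∀ᶠ x in atTop, |b| / c ≤ exp ((1 - a) * x) :=
    (tendsto_exp_atTop.comp
      (tendsto_id.const_mul_atTop (sub_pos.2 ha₁))).eventually_ge_atTop _
  obtain ⟨x₀, hx₀⟩ := eventually_atTop.1 hlarge
  refine ⟨|b| * exp (a * x₀), fun x => ?_⟩
  have hb : b * exp (a * x) ≤ |b| * exp (a * x) := by gcongr; exact le_abs_self b
  rcases le_total x₀ x with hx | hx
  · have hle : |b| * exp (a * x) ≤ c * exp x := calc
      |b| * exp (a * x) ≤ exp ((1 - a) * x) * c * exp (a * x) := by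
        gcongr
        exact (div_le_iff₀ hc).1 (hx₀ x hx)
      _ = c * exp x := by rw [mul_right_comm, ← exp_add]; ring_nf
    linarith [mul_nonneg (abs_nonneg b) (exp_pos (a * x₀)).le]
  · have hle : |b| * exp (a * x) ≤ |b| * exp (a * x₀) := by gcongr
    linarith [mul_pos hc (exp_pos x)]

theorem integrable_exp_mul_sub_exp_add_mul_exp {a s : ℝ} (ha₀ : 0 ≤ a) (ha₁ : a < 1) (hs : 0 < s)
    (b : ℝ) : Integrable (fun x => exp (s * x - exp x + b * exp (a * x))) := by
  obtain ⟨C, hC⟩ := exists_forall_mul_exp_le ha₀ ha₁ one_half_pos b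
  refine ((integrable_exp_mul_sub_mul_exp hs one_half_pos).const_mul (exp C)).mono'
    (by fun_prop) (ae_of_all _ fun x => ?_)
  rw [norm_of_nonneg (exp_pos _).le, ← exp_add, exp_le_exp]
  linarith [hC x]

theorem integrableOn_exp_mul_add_mul_exp_Iic {s : ℝ} (hs : 0 < s) (c K : ℝ) :
    IntegrableOn (fun x => exp (s * x + c * exp x)) (Set.Iic K) := by
  refine ((integrableOn_exp_mul_Iic hs K).const_mul (exp (|c| * exp K))).mono'
    (by fun_prop) ?_
  refine (ae_restrict_mem measurableSet_Iic).mono fun x (hx : x ≤ K) => ?_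
  rw [norm_of_nonneg (exp_pos _).le, ← exp_add, add_comm]
  gcongr
  exact le_abs_self c

theorem tendsto_exp_mul_add_mul_exp_atBot {s : ℝ} (hs : 0 < s) (c : ℝ) :
    Tendsto (fun x => exp (s * x + c * exp x)) atBot (𝓝 0) :=
  tendsto_exp_atBot.comp <|
    (tendsto_id.const_mul_atBot hs).atBot_add (tendsto_exp_atBot.const_mul c)

theorem tendsto_exp_mul_add_mul_exp_atTop {c : ℝ} (hc : c < 0) (s : ℝ) :
    Tendsto (fun x => exp (s * x + c * exp x)) atTop (𝓝 0) := by
  refine ((tendsto_rpow_mul_exp_neg_mul_atTop_nhds_zero s (-c) (neg_pos.2 hc)).comp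
    tendsto_exp_atTop).congr fun x => ?_
  rw [Function.comp_apply, ← exp_mul, ← exp_add, neg_neg, mul_comm x]

end ExponentialCoordinates

section ContourShift

theorem tendsto_intervalIntegral_zero_of_norm_le {E : Type*} [NormedAddCommGroup E]
    [NormedSpace ℝ E] {l : Filter ℝ} {g : ℝ → ℝ → E} {B : ℝ → ℝ} {p q : ℝ} (hpq : p ≤ q)
    (hg : ∀ x, ∀ y ∈ Set.Icc p q, ‖g x y‖ ≤ B x) (hB : Tendsto B l (𝓝 0)) :
    Tendsto (fun x => ∫ y in p..q, g x y) l (𝓝 0) := by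
  refine squeeze_zero_norm (fun x => ?_) (by simpa only [zero_mul] using hB.mul_const |q - p|)
  refine intervalIntegral.norm_integral_le_of_norm_le_const fun y hy => hg x y ?_
  rw [Set.uIoc_of_le hpq] at hy
  exact Set.Ioc_subset_Icc_self hy

variable {f : ℂ → ℂ} {p q : ℝ}

theorem intervalIntegral_horizontal_eq_add_vertical (hf : Differentiable ℂ f) (a b p q : ℝ) :
    ∫ x in a..b, f (x + q * Complex.I) = (∫ x in a..b, f (x + p * Complex.I)) +
      Complex.I * (∫ y in p..q, f (b + y * Complex.I)) -
      Complex.I * ∫ y in p..q, f (a + y * Complex.I) := by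
  have hrect := Complex.integral_boundary_rect_eq_zero_of_differentiableOn f ⟨a, p⟩ ⟨b, q⟩
    hf.differentiableOn
  simp only [smul_eq_mul] at hrect
  linear_combination -hrect

theorem integral_Iic_horizontal_eq_add_vertical (hf : Differentiable ℂ f) {b : ℝ}
    (hp : IntegrableOn (fun x : ℝ => f (x + p * Complex.I)) (Set.Iic b))
    (hq : IntegrableOn (fun x : ℝ => f (x + q * Complex.I)) (Set.Iic b))
    (hvert : Tendsto (fun a : ℝ => ∫ y in p..q, f (a + y * Complex.I)) atBot (𝓝 0)) :
    ∫ x in Set.Iic b, f (x + q * Complex.I) = (∫ x in Set.Iic b, f (x + p * Complex.I)) +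
      Complex.I * ∫ y in p..q, f (b + y * Complex.I) := by
  refine tendsto_nhds_unique (intervalIntegral_tendsto_integral_Iic b hq tendsto_id) ?_
  simp only [id, intervalIntegral_horizontal_eq_add_vertical hf _ _ p q]
  simpa only [id, mul_zero, sub_zero] using
    ((intervalIntegral_tendsto_integral_Iic b hp tendsto_id).add_const _).sub
      (hvert.const_mul Complex.I)

theorem integral_Ioi_horizontal_eq_sub_vertical (hf : Differentiable ℂ f) {a : ℝ}
    (hp : IntegrableOn (fun x : ℝ => f (x + p * Complex.I)) (Set.Ioi a))
    (hq : IntegrableOn (fun x : ℝ => f (x + q * Complex.I)) (Set.Ioi a))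
    (hvert : Tendsto (fun b : ℝ => ∫ y in p..q, f (b + y * Complex.I)) atTop (𝓝 0)) :
    ∫ x in Set.Ioi a, f (x + q * Complex.I) = (∫ x in Set.Ioi a, f (x + p * Complex.I)) -
      Complex.I * ∫ y in p..q, f (a + y * Complex.I) := by
  refine tendsto_nhds_unique (intervalIntegral_tendsto_integral_Ioi a hq tendsto_id) ?_
  simp only [id, intervalIntegral_horizontal_eq_add_vertical hf _ _ p q]
  simpa only [id, mul_zero, add_zero] using
    ((intervalIntegral_tendsto_integral_Ioi a hp tendsto_id).add
      (hvert.const_mul Complex.I)).sub_const _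

end ContourShift

/-- The integrand of the Hankel-type representation
`W_{-α,μ}(-z) = (2πi)⁻¹ ∫ σ^{-μ} exp (σ - z σ^α) dσ`, written in the coordinate `w = log σ`, in
which it is entire and the two sides of the cut of `σ^α` are the lines `Im w = ±π`. -/
noncomputable def wrightKernel (α μ z : ℝ) (w : ℂ) : ℂ :=
  Complex.exp (Complex.exp w - z * Complex.exp (α * w) + (1 - μ) * w)

namespace wrightKernel

variable {α μ : ℝ}

@[fun_prop]
protected theorem differentiable (α μ z : ℝ) : Differentiable ℂ (wrightKernel α μ z) := by
  unfold wrightKernel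
  fun_prop

@[fun_prop]
protected theorem continuous (α μ z : ℝ) : Continuous (wrightKernel α μ z) :=
  (wrightKernel.differentiable α μ z).continuous

theorem apply_ofReal (α μ z x : ℝ) : wrightKernel α μ z x =
    (exp (exp x - z * exp (α * x) + (1 - μ) * x) : ℝ) := by
  simp [wrightKernel]

theorem norm_apply (α μ z x y : ℝ) : ‖wrightKernel α μ z (x + y * Complex.I)‖ =
    exp (exp x * cos y - z * (exp (α * x) * cos (α * y)) + (1 - μ) * x) := by
  have hmul : (α : ℂ) * (x + y * Complex.I) = (α * x : ℝ) + (α * y : ℝ) * Complex.I := by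
    push_cast
    ring
  rw [wrightKernel, Complex.norm_exp, hmul]
  congr 1
  simp only [Complex.add_re, Complex.sub_re, Complex.re_ofReal_mul, Complex.exp_re]
  simp

theorem exists_norm_le (hα₀ : 0 < α) (hα₁ : α < 1) (μ z : ℝ) {c₀ c : ℝ} (hc : c₀ < c) :
    ∃ C, ∀ x y : ℝ, cos y ≤ c₀ →
      ‖wrightKernel α μ z (x + y * Complex.I)‖ ≤ C * exp ((1 - μ) * x + c * exp x) := by
  obtain ⟨C, hC⟩ := exists_forall_mul_exp_le hα₀.le hα₁ (sub_pos.2 hc) |z|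
  refine ⟨exp C, fun x y hy => ?_⟩
  rw [norm_apply, ← exp_add, exp_le_exp]
  have hmain : exp x * cos y ≤ exp x * c₀ := by gcongr
  have hpert : -(z * (exp (α * x) * cos (α * y))) ≤ |z| * exp (α * x) := calc
    _ ≤ |z * (exp (α * x) * cos (α * y))| := neg_le_abs _
    _ = |z| * (exp (α * x) * |cos (α * y)|) := by rw [abs_mul, abs_mul, abs_exp]
    _ ≤ |z| * exp (α * x) := by
      gcongr
      exact mul_le_of_le_one_right (exp_pos _).le (abs_cos_le_one _)
  linarith [hC x]

theorem integrable_horizontal (hα₀ : 0 < α) (hα₁ : α < 1) (hμ : μ < 1) (z : ℝ) {y : ℝ}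
    (hy : cos y < 0) : Integrable fun x : ℝ => wrightKernel α μ z (x + y * Complex.I) := by
  obtain ⟨C, hC⟩ := exists_norm_le hα₀ hα₁ μ z (show cos y < cos y / 2 by linarith)
  have hdom := integrable_exp_mul_sub_mul_exp (sub_pos.2 hμ) (show 0 < -(cos y / 2) by linarith)
  refine (hdom.const_mul C).mono' (by fun_prop) (ae_of_all _ fun x => ?_)
  simpa only [neg_mul, sub_neg_eq_add] using hC x y le_rfl

theorem integrableOn_Iic_horizontal (hα₀ : 0 < α) (hα₁ : α < 1) (hμ : μ < 1) (z y K : ℝ) :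
    IntegrableOn (fun x : ℝ => wrightKernel α μ z (x + y * Complex.I)) (Set.Iic K) := by
  obtain ⟨C, hC⟩ := exists_norm_le hα₀ hα₁ μ z one_lt_two
  exact ((integrableOn_exp_mul_add_mul_exp_Iic (sub_pos.2 hμ) 2 K).const_mul C).mono'
    (by fun_prop) (ae_of_all _ fun x => hC x y (cos_le_one y))

theorem tendsto_vertical_atBot (hα₀ : 0 < α) (hα₁ : α < 1) (hμ : μ < 1) (z : ℝ) {p q : ℝ}
    (hpq : p ≤ q) :
    Tendsto (fun x : ℝ => ∫ y in p..q, wrightKernel α μ z (x + y * Complex.I)) atBot (𝓝 0) := by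
  obtain ⟨C, hC⟩ := exists_norm_le hα₀ hα₁ μ z one_lt_two
  refine tendsto_intervalIntegral_zero_of_norm_le hpq (fun x y _ => hC x y (cos_le_one y)) ?_
  simpa only [mul_zero] using
    (tendsto_exp_mul_add_mul_exp_atBot (sub_pos.2 hμ) 2).const_mul C

theorem tendsto_vertical_atTop (hα₀ : 0 < α) (hα₁ : α < 1) (μ z : ℝ) {p q : ℝ}
    (hp : π / 2 < p) (hpq : p ≤ q) (hq : q ≤ π) :
    Tendsto (fun x : ℝ => ∫ y in p..q, wrightKernel α μ z (x + y * Complex.I)) atTop (𝓝 0) := by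
  have hcos : cos p < 0 := cos_neg_of_pi_div_two_lt_of_lt hp (by linarith [pi_pos])
  obtain ⟨C, hC⟩ := exists_norm_le hα₀ hα₁ μ z (show cos p < cos p / 2 by linarith)
  refine tendsto_intervalIntegral_zero_of_norm_le hpq (fun x y hy => hC x y <|
    cos_le_cos_of_nonneg_of_le_pi (by linarith [pi_pos]) (hy.2.trans hq) hy.1) ?_
  simpa only [mul_zero] using
    (tendsto_exp_mul_add_mul_exp_atTop (show cos p / 2 < 0 by linarith) (1 - μ)).const_mul C

/-- The kernel is real on the real axis, so lowering the half-line `Re w ≤ K` of `Im w = π` to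
`Im w = 0` leaves only vertical segments; the half-line `Re w > K` is lowered to height `φ`. -/
theorem im_integral_pi_eq (hα₀ : 0 < α) (hα₁ : α < 1) (hμ : μ < 1) (z K : ℝ) {φ : ℝ}
    (hφ : φ ∈ Set.Ioc (π / 2) π) :
    (∫ x : ℝ, wrightKernel α μ z (x + π * Complex.I)).im =
      (∫ y in (0 : ℝ)..φ, wrightKernel α μ z (K + y * Complex.I)).re +
        (∫ x in Set.Ioi K, wrightKernel α μ z (x + φ * Complex.I)).im := by
  have hdiff := wrightKernel.differentiable α μ z
  have hπ := integrable_horizontal hα₀ hα₁ hμ z (y := π) (by norm_num)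
  have hφint := integrable_horizontal hα₀ hα₁ hμ z
    (cos_neg_of_pi_div_two_lt_of_lt hφ.1 (by linarith [hφ.2, pi_pos]))
  have hleft := integral_Iic_horizontal_eq_add_vertical hdiff
    (integrableOn_Iic_horizontal hα₀ hα₁ hμ z 0 K) hπ.integrableOn
    (tendsto_vertical_atBot hα₀ hα₁ hμ z pi_pos.le)
  have hright := integral_Ioi_horizontal_eq_sub_vertical hdiff (a := K)
    hφint.integrableOn hπ.integrableOn (tendsto_vertical_atTop hα₀ hα₁ μ z hφ.1 hφ.2 le_rfl)
  have hreal : (∫ x : ℝ in Set.Iic K, wrightKernel α μ z (x + (0 : ℝ) * Complex.I)).im = 0 := by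
    simp only [Complex.ofReal_zero, zero_mul, add_zero, apply_ofReal]
    rw [integral_complex_ofReal, Complex.ofReal_im]
  have hvert (a b : ℝ) : IntervalIntegrable
      (fun y : ℝ => wrightKernel α μ z (K + y * Complex.I)) volume a b :=
    Continuous.intervalIntegrable (by fun_prop) a b
  rw [← intervalIntegral.integral_Iic_add_Ioi hπ.integrableOn hπ.integrableOn, hleft, hright,
    ← intervalIntegral.integral_add_adjacent_intervals (hvert 0 φ) (hvert φ π)]
  simp only [Complex.add_im, Complex.sub_im, Complex.add_re, Complex.I_mul_im, hreal]
  ring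

theorem hasSum_im_pi (α μ z x : ℝ) :
    HasSum (fun n : ℕ => (-z) ^ n / n.factorial * sin (π * (α * n + (1 - μ))) *
      exp ((α * n + (1 - μ)) * x - exp x))
      (wrightKernel α μ z (x + π * Complex.I)).im := by
  set w : ℂ := x + π * Complex.I with hw
  have hker : wrightKernel α μ z w =
      Complex.exp (-exp x + (1 - μ) * w) * Complex.exp (-z * Complex.exp (α * w)) := by
    rw [wrightKernel, ← Complex.exp_add, hw, Complex.exp_add (x : ℂ), Complex.exp_pi_mul_I]
    push_cast
    ring_nf
  have hexp := NormedSpace.expSeries_div_hasSum_exp (-z * Complex.exp (α * w))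
  rw [← Complex.exp_eq_exp_ℂ] at hexp
  rw [hker]
  refine (Complex.hasSum_im (hexp.mul_left _)).congr_fun fun n => ?_
  have hterm : Complex.exp (-exp x + (1 - μ) * w) *
      ((-z * Complex.exp (α * w)) ^ n / n.factorial) =
      ((-z) ^ n / n.factorial * exp ((α * n + (1 - μ)) * x - exp x) : ℝ) *
        Complex.exp ((π * (α * n + (1 - μ)) : ℝ) * Complex.I) := by
    rw [hw]
    push_cast
    rw [mul_pow, ← Complex.exp_nat_mul, mul_assoc, ← Complex.exp_add, mul_div_assoc',
      mul_left_comm, ← Complex.exp_add, div_mul_eq_mul_div]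
    congr 3
    ring
  rw [hterm, Complex.im_ofReal_mul, Complex.exp_ofReal_mul_I_im]
  ring

end wrightKernel

theorem sin_pi_mul_mul_Gamma {s : ℝ} (hs : 0 < s) :
    sin (π * s) * Gamma s = π / Gamma (1 - s) := by
  have hreflection := Gamma_mul_Gamma_one_sub s
  have hΓ := (Gamma_pos_of_pos hs).ne'
  rcases eq_or_ne (sin (π * s)) 0 with hsin | hsin
  · rw [hsin, div_zero, mul_eq_zero_iff_left hΓ] at hreflection
    rw [hsin, hreflection, zero_mul, div_zero]
  · have hΓ' : Gamma (1 - s) ≠ 0 := by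
      refine right_ne_zero_of_mul (a := Gamma s) ?_
      rw [hreflection]
      exact div_ne_zero pi_ne_zero hsin
    rw [eq_div_iff hΓ', mul_assoc, hreflection, mul_div_cancel₀ _ hsin]

theorem hasSum_abs_pow_mul_exp (α ν z x : ℝ) :
    HasSum (fun n : ℕ => |z| ^ n / n.factorial * exp ((α * n + ν) * x - exp x))
      (exp (ν * x - exp x + |z| * exp (α * x))) := by
  have hexp := NormedSpace.expSeries_div_hasSum_exp (|z| * exp (α * x))
  rw [← exp_eq_exp_ℝ] at hexp
  rw [exp_add]
  refine (hexp.mul_left _).congr_fun fun n => ?_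
  rw [mul_pow, ← exp_nat_mul, mul_div_right_comm, mul_left_comm, ← exp_add]
  ring_nf

theorem pi_mul_wrightFn_neg {α μ : ℝ} (hα₀ : 0 < α) (hα₁ : α < 1) (hμ : μ < 1) (z : ℝ) :
    π * wrightFn (-α) μ (-z) = (∫ x : ℝ, wrightKernel α μ z (x + π * Complex.I)).im := by
  have hcos : cos π < 0 := by norm_num
  have hs (n : ℕ) : 0 < α * n + (1 - μ) := by
    linarith [mul_nonneg hα₀.le (n.cast_nonneg (α := ℝ))]
  have hbound (n : ℕ) (x : ℝ) : ‖(-z) ^ n / n.factorial * sin (π * (α * n + (1 - μ))) *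
      exp ((α * n + (1 - μ)) * x - exp x)‖ ≤
      |z| ^ n / n.factorial * exp ((α * n + (1 - μ)) * x - exp x) := by
    simp only [norm_mul, norm_div, norm_pow, norm_eq_abs, abs_neg, abs_exp, Nat.abs_cast]
    gcongr
    exact mul_le_of_le_one_right (by positivity) (abs_sin_le_one _)
  have hsum := hasSum_integral_of_dominated_convergence (μ := volume)
    (fun (n : ℕ) x => |z| ^ n / n.factorial * exp ((α * n + (1 - μ)) * x - exp x))
    (F := fun (n : ℕ) x => (-z) ^ n / n.factorial * sin (π * (α * n + (1 - μ))) *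
      exp ((α * n + (1 - μ)) * x - exp x))
    (fun n => by fun_prop) (fun n => ae_of_all _ (hbound n))
    (ae_of_all _ fun x => (hasSum_abs_pow_mul_exp α (1 - μ) z x).summable)
    (by simpa only [(hasSum_abs_pow_mul_exp α (1 - μ) z _).tsum_eq] using
      integrable_exp_mul_sub_exp_add_mul_exp hα₀.le hα₁ (sub_pos.2 hμ) |z|)
    (ae_of_all _ fun x => wrightKernel.hasSum_im_pi α μ z x)
  have him : ∫ x : ℝ, (wrightKernel α μ z (x + π * Complex.I)).im =
      (∫ x : ℝ, wrightKernel α μ z (x + π * Complex.I)).im :=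
    integral_im (wrightKernel.integrable_horizontal hα₀ hα₁ hμ z hcos)
  rw [← him, ← hsum.tsum_eq, wrightFn, ← tsum_mul_left]
  refine tsum_congr fun n => ?_
  rw [integral_const_mul, integral_exp_mul_sub_exp (hs n), mul_assoc,
    sin_pi_mul_mul_Gamma (hs n), show 1 - (α * n + (1 - μ)) = -α * n + μ by ring]
  ring

section WrightBound

variable {α μ φ z K : ℝ}

theorem norm_integral_wrightKernel_vertical_le (hα : 0 ≤ α) (hφ₀ : 0 ≤ φ) (hφ : α * φ ≤ π)
    (hz : 0 ≤ z) :
    ‖∫ y in (0 : ℝ)..φ, wrightKernel α μ z (K + y * Complex.I)‖ ≤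
      exp (exp K + (1 - μ) * K - cos (α * φ) * z * exp (α * K)) * φ := by
  have hbound : ∀ y ∈ Set.uIoc 0 φ, ‖wrightKernel α μ z (K + y * Complex.I)‖ ≤
      exp (exp K + (1 - μ) * K - cos (α * φ) * z * exp (α * K)) := by
    intro y hy
    rw [Set.uIoc_of_le hφ₀] at hy
    rw [wrightKernel.norm_apply, exp_le_exp]
    have hcos : cos (α * φ) ≤ cos (α * y) :=
      cos_le_cos_of_nonneg_of_le_pi (mul_nonneg hα hy.1.le) hφ (by gcongr; exact hy.2)
    have hdecay : z * (exp (α * K) * cos (α * φ)) ≤ z * (exp (α * K) * cos (α * y)) := by gcongr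
    linarith [mul_le_of_le_one_right (exp_pos K).le (cos_le_one y)]
  simpa only [sub_zero, abs_of_nonneg hφ₀] using
    intervalIntegral.norm_integral_le_of_norm_le_const hbound

theorem norm_integral_wrightKernel_horizontal_le (hα : 0 ≤ α) (hμ : μ < 1) (hφ : cos φ < 0)
    (hαφ : 0 ≤ cos (α * φ)) (hz : 0 ≤ z) :
    ‖∫ x in Set.Ioi K, wrightKernel α μ z (x + φ * Complex.I)‖ ≤
      exp (-(cos (α * φ) * z * exp (α * K))) * ∫ x, exp ((1 - μ) * x - -cos φ * exp x) := by
  have hdom := integrable_exp_mul_sub_mul_exp (sub_pos.2 hμ) (neg_pos.2 hφ)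
  calc
    _ ≤ ∫ x in Set.Ioi K, exp (-(cos (α * φ) * z * exp (α * K))) *
        exp ((1 - μ) * x - -cos φ * exp x) := by
      refine norm_integral_le_of_norm_le (hdom.integrableOn.const_mul _) ?_
      refine (ae_restrict_mem measurableSet_Ioi).mono fun x (hx : K < x) => ?_
      rw [wrightKernel.norm_apply, ← exp_add, exp_le_exp]
      have hdecay : z * (exp (α * K) * cos (α * φ)) ≤ z * (exp (α * x) * cos (α * φ)) := by gcongr
      linarith
    _ ≤ _ := by
      rw [integral_const_mul]
      exact mul_le_mul_of_nonneg_left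
        (setIntegral_le_integral hdom (ae_of_all _ fun x => (exp_pos _).le)) (exp_pos _).le

theorem pi_mul_abs_wrightFn_neg_le (hα₀ : 0 < α) (hα₁ : α < 1) (hμ : μ < 1)
    (hφ : φ ∈ Set.Ioc (π / 2) π) (hαφ : 0 ≤ cos (α * φ)) (hz : 0 ≤ z) (K : ℝ) :
    π * |wrightFn (-α) μ (-z)| ≤ (φ + ∫ x, exp ((1 - μ) * x - -cos φ * exp x)) *
      exp ((2 - μ) * exp K - cos (α * φ) * z * exp (α * K)) := by
  have hφ₀ : 0 < φ := by linarith [hφ.1, pi_pos]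
  have hcos : cos φ < 0 := cos_neg_of_pi_div_two_lt_of_lt hφ.1 (by linarith [hφ.2, pi_pos])
  have hK : (1 - μ) * K ≤ (1 - μ) * exp K :=
    mul_le_mul_of_nonneg_left (by linarith [add_one_le_exp K]) (by linarith)
  have hpos : 0 ≤ (2 - μ) * exp K := mul_nonneg (by linarith) (exp_pos K).le
  have hvert := (Complex.abs_re_le_norm _).trans
    (norm_integral_wrightKernel_vertical_le (μ := μ) (K := K) hα₀.le hφ₀.le
      ((mul_le_of_le_one_left hφ₀.le hα₁.le).trans hφ.2) hz)
  have hhor := (Complex.abs_im_le_norm _).trans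
    (norm_integral_wrightKernel_horizontal_le (K := K) hα₀.le hμ hcos hαφ hz)
  set J := ∫ x, exp ((1 - μ) * x - -cos φ * exp x)
  have : 0 ≤ J := integral_nonneg fun x => (exp_pos _).le
  calc π * |wrightFn (-α) μ (-z)|
      = |(∫ y in (0 : ℝ)..φ, wrightKernel α μ z (K + y * Complex.I)).re +
          (∫ x in Set.Ioi K, wrightKernel α μ z (x + φ * Complex.I)).im| := by
        rw [← wrightKernel.im_integral_pi_eq hα₀ hα₁ hμ z K hφ,
          ← pi_mul_wrightFn_neg hα₀ hα₁ hμ, abs_mul, abs_of_pos pi_pos]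
    _ ≤ exp (exp K + (1 - μ) * K - cos (α * φ) * z * exp (α * K)) * φ +
          exp (-(cos (α * φ) * z * exp (α * K))) * J :=
        (abs_add_le _ _).trans (add_le_add hvert hhor)
    _ ≤ exp ((2 - μ) * exp K - cos (α * φ) * z * exp (α * K)) * φ +
          exp ((2 - μ) * exp K - cos (α * φ) * z * exp (α * K)) * J := by
        gcongr <;> linarith
    _ = (φ + J) * exp ((2 - μ) * exp K - cos (α * φ) * z * exp (α * K)) := by ring

theorem exists_abs_wrightFn_neg_le (hα₀ : 0 < α) (hα₁ : α < 1) (hμ : μ < 1) :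
    ∃ C > 0, ∃ c > 0, ∀ z R : ℝ, 0 ≤ z → 0 < R →
      |wrightFn (-α) μ (-z)| ≤ C * exp ((2 - μ) * R - c * z * R ^ α) := by
  -- With this angle, `φ > π / 2` and `α * φ = π - φ < π / 2` hold simultaneously.
  set φ := π / (1 + α) with hφ
  have hφ_gt : π / 2 < φ := by rw [hφ]; gcongr; linarith
  have hφ_lt : φ < π := div_lt_self pi_pos (by linarith)
  have hαφ : α * φ = π - φ := by rw [hφ]; field_simp; ring
  have hcos : 0 < cos (α * φ) := by
    rw [hαφ]
    exact cos_pos_of_mem_Ioo ⟨by linarith [pi_pos], by linarith⟩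
  set J := ∫ x, exp ((1 - μ) * x - -cos φ * exp x)
  have hJ : 0 ≤ J := integral_nonneg fun x => (exp_pos _).le
  have hφJ : 0 < φ + J := by linarith [pi_pos]
  refine ⟨(φ + J) / π, div_pos hφJ pi_pos, cos (α * φ), hcos, fun z R hz hR => ?_⟩
  rw [div_mul_eq_mul_div, le_div_iff₀' pi_pos, rpow_def_of_pos hR, mul_comm (log R)]
  simpa only [exp_log hR] using
    pi_mul_abs_wrightFn_neg_le hα₀ hα₁ hμ ⟨hφ_gt, hφ_lt.le⟩ hcos.le hz (log R)

theorem exists_abs_wrightFn_neg_rpow_mul_le (hα₀ : 0 < α) (hα₁ : α < 1) (hμ : μ < 1) {a : ℝ}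
    (ha : 0 < a) :
    ∃ C > 0, ∃ k > 0, ∀ t s : ℝ, 0 < t → 0 ≤ s →
      |wrightFn (-α) μ (-(t ^ (-α) * s))| ≤ C * exp (k * t - a * s) := by
  obtain ⟨C, hC, c, hc, hW⟩ := exists_abs_wrightFn_neg_le hα₀ hα₁ hμ
  obtain ⟨k, hk, hkα⟩ : ∃ k > 0, c * k ^ α = a :=
    ⟨(a / c) ^ α⁻¹, by positivity, by
      rw [rpow_inv_rpow (by positivity) hα₀.ne', mul_div_cancel₀ _ hc.ne']⟩
  refine ⟨C, hC, (2 - μ) * k, mul_pos (by linarith) hk,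
    fun t s ht hs => (hW _ (k * t) (by positivity) (by positivity)).trans_eq ?_⟩
  have hexponent : c * (t ^ (-α) * s) * (k * t) ^ α = a * s := by
    have : 0 < t ^ α := rpow_pos_of_pos ht α
    rw [mul_rpow hk.le ht.le, rpow_neg ht.le]
    field_simp
    linear_combination s * hkα
  rw [hexponent, mul_assoc]

end WrightBound

section FundamentalSolution

theorem inv_rpow_le_exp_div {y p : ℝ} (hy : 0 < y) (hp : 0 ≤ p) : (y ^ p)⁻¹ ≤ exp (p / y) := by
  have hle : y⁻¹ ≤ exp y⁻¹ := by linarith [add_one_le_exp y⁻¹]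
  calc (y ^ p)⁻¹ = y⁻¹ ^ p := (inv_rpow hy.le p).symm
    _ ≤ exp y⁻¹ ^ p := by gcongr
    _ = exp (p / y) := by rw [← exp_mul, mul_comm, div_eq_mul_inv]

theorem heatKernel_le_exp {d r s : ℝ} (hd : 0 ≤ d) (hr : d ≤ r ^ 2) (hs : 0 < s) :
    exp (-r ^ 2 / (4 * s)) / (4 * π * s) ^ (d / 2) ≤ exp (2 * s - r) := by
  have hpi := pi_gt_three
  have hnormalization : ((4 * π * s) ^ (d / 2))⁻¹ ≤ exp (r ^ 2 / (8 * s)) := by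
    refine (inv_rpow_le_exp_div (by positivity) (by positivity)).trans (exp_le_exp.2 ?_)
    rw [div_div, div_le_div_iff₀ (by positivity) (by positivity)]
    have : d * s ≤ r ^ 2 * s * π := by
      nlinarith [mul_nonneg (sq_nonneg r) hs.le, mul_le_mul_of_nonneg_right hr hs.le]
    linarith
  have hamgm : -r ^ 2 / (4 * s) + r ^ 2 / (8 * s) ≤ 2 * s - r := by
    have hsq : 2 * s - r - (-r ^ 2 / (4 * s) + r ^ 2 / (8 * s)) = (r - 4 * s) ^ 2 / (8 * s) := by
      field_simp
      ring
    have : 0 ≤ (r - 4 * s) ^ 2 / (8 * s) := by positivity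
    linarith
  calc _ ≤ exp (-r ^ 2 / (4 * s)) * exp (r ^ 2 / (8 * s)) := by rw [div_eq_mul_inv]; gcongr
    _ ≤ exp (2 * s - r) := by rw [← exp_add]; gcongr

theorem exists_abs_fundSol_le {α : ℝ} (hα : α ∈ Set.Ioo (0 : ℝ) 1) :
    ∃ C > 0, ∃ k > 0, ∀ (d : ℕ) (t : ℝ) (x : EuclideanSpace ℝ (Fin d)), 0 < t → d ≤ ‖x‖ ^ 2 →
      |fundSol α d t x| ≤ t ^ (-α) * (C * exp (k * t - ‖x‖)) := by
  obtain ⟨C, hC, k, hk, hW⟩ := exists_abs_wrightFn_neg_rpow_mul_le (μ := 1 - α) hα.1 hα.2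
    (by linarith [hα.1]) (show (0 : ℝ) < 4 by norm_num)
  refine ⟨C, hC, k, hk, fun d t x ht hx => ?_⟩
  rw [fundSol, abs_mul, abs_of_pos (rpow_pos_of_pos ht _)]
  gcongr
  have hint : ∫ s in Set.Ioi (0 : ℝ), C * exp (k * t - ‖x‖) * exp (-s) =
      C * exp (k * t - ‖x‖) := by
    rw [integral_const_mul, integral_exp_neg_Ioi_zero, mul_one]
  rw [← hint, ← norm_eq_abs]
  refine norm_integral_le_of_norm_le ((integrableOn_exp_neg_Ioi 0).const_mul _) ?_
  refine (ae_restrict_mem measurableSet_Ioi).mono fun s (hs : 0 < s) => ?_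
  have := pi_pos
  rw [norm_mul, norm_of_nonneg (by positivity), norm_eq_abs]
  calc _ ≤ exp s * exp (2 * s - ‖x‖) * (C * exp (k * t - 4 * s)) := by
        gcongr
        · exact heatKernel_le_exp d.cast_nonneg hx hs
        · exact hW t s ht hs.le
    _ = C * exp (k * t - ‖x‖) * exp (-s) := by
        rw [mul_left_comm, mul_assoc C, ← exp_add, ← exp_add, ← exp_add]
        ring_nf

theorem stmt1_general (α : ℝ) (hα : α ∈ Set.Ioo (0 : ℝ) 1) :
    ∃ K : ℝ, ∀ (d : ℕ) (x : ℝ → EuclideanSpace ℝ (Fin d)),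
      (∀ᶠ t in atTop, K * t ≤ ‖x t‖) → Tendsto (fun t => fundSol α d t (x t)) atTop (𝓝 0) := by
  obtain ⟨C, hC, k, hk, hbound⟩ := exists_abs_fundSol_le hα
  refine ⟨k + 1, fun d x hx => squeeze_zero_norm' (a := fun t => t ^ (-α) * C) ?_ ?_⟩
  · filter_upwards [hx, eventually_ge_atTop 1, eventually_ge_atTop (d : ℝ)] with t hxt ht htd
    have : k * t ≤ ‖x t‖ := by linarith
    have htx : t ≤ ‖x t‖ := by linarith [mul_nonneg hk.le (zero_le_one.trans ht)]
    refine (hbound d t (x t) (by linarith) (by nlinarith)).trans ?_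
    gcongr
    exact mul_le_of_le_one_right hC.le (exp_le_one_iff.2 (by linarith))
  · simpa only [zero_mul] using (tendsto_rpow_neg_atTop hα.1).mul_const C

theorem eventually_mul_le_norm_rpow_smul {E : Type*} [NormedAddCommGroup E] [NormedSpace ℝ E]
    {β m : ℝ} (hβ : 1 < β) (hm : m ≠ 0) {v : E} (hv : v ≠ 0) (K : ℝ) :
    ∀ᶠ t : ℝ in atTop, K * t ≤ ‖(m * t ^ β) • v‖ := by
  have hpow : Tendsto (fun t : ℝ => |m| * ‖v‖ * t ^ (β - 1)) atTop atTop :=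
    (tendsto_rpow_atTop (sub_pos.2 hβ)).const_mul_atTop (by positivity)
  filter_upwards [hpow.eventually_ge_atTop K, eventually_gt_atTop 0] with t hK ht
  calc K * t ≤ |m| * ‖v‖ * t ^ (β - 1) * t := by gcongr
    _ = |m| * ‖v‖ * t ^ β := by rw [mul_assoc, ← rpow_add_one ht.ne', sub_add_cancel]
    _ = ‖(m * t ^ β) • v‖ := by
      rw [norm_smul, norm_mul, norm_eq_abs, norm_of_nonneg (rpow_nonneg ht.le β), mul_right_comm]

end FundamentalSolution

theorem stmt1 (d : ℕ) (hd : 1 ≤ d) (α β m : ℝ) (hα : α ∈ Set.Ioo (0 : ℝ) 1)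
    (hβ : 1 < β) (hm : 0 < m)
    (v : EuclideanSpace ℝ (Fin d)) (hv : ‖v‖ = 1) :
    Tendsto (fun t : ℝ => fundSol α d t ((m * t ^ β) • v)) atTop (nhds 0) := by
  obtain ⟨K, hK⟩ := stmt1_general α hα
  exact hK d _ (eventually_mul_le_norm_rpow_smul hβ hm.ne' (norm_ne_zero_iff.1 (by simp [hv])) K)
end
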